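/- arXiv:1903.03747 — 6 statements merged into one kernel-verified Lean document; each statement's English description precedes it below -/
import Mathlib

section
/- For real numbers X, Y with |X| < 1 and −1 < Y < 0, the generating series of height-one multiple T-values satisfies ∑_{m≥1, n≥1} T(1,...,1,m+1) X^m Y^{n−1} (with n−1 ones before m+1) = 2 ∫_0^1 t^{−X} (1−t)^{−Y−1} (1+t)^{Y−1} dt + 1/Y. -/
/-- The multiple T-value `T(k₁, …, k_r)`:
`2^r` times the sum over `0 < m₁ < ⋯ < m_r` with `m_i ≡ i (mod 2)`
of `1 / (m₁^{k₁} ⋯ m_r^{k_r})`. -/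
noncomputable def MTV (k : List ℕ) : ℝ :=
  2 ^ k.length *
    ∑' f : {f : Fin k.length → ℕ // StrictMono f ∧ ∀ i, f i % 2 = ((i : ℕ) + 1) % 2},
      ∏ i : Fin k.length, (1 : ℝ) / (f.1 i : ℝ) ^ k.get i

open MeasureTheory

/-
Group the index tuples of the height-one values by their greatest entry `N`. Summing over `n` then
produces the coefficient `a_N` of `t ^ N` in `g = ((1 + t) / (1 - t)) ^ Y`, because a nested sum of
`2 / m` with alternating parities is a coefficient of a divided power of `log ((1 + t) / (1 - t))`.
Summing over `m` produces `X / (N - X)`, which is `X` times the integral of `t ^ (N - X - 1)` over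
`(0, 1)`. Hence `Y` times the series is `X` times the integral of `(g t - 1) * t ^ (-X - 1)`.
Integration by parts moves the derivative to `g`, and the boundary value `g 1 - 1 = -1` accounts
for the term `1 / Y`.
-/

open scoped ENNReal

section Alternating

theorem strictMono_snoc_iff {α : Type*} [Preorder α] {n : ℕ} {f : Fin n → α} {a : α} :
    StrictMono (Fin.snoc f a : Fin (n + 1) → α) ↔ StrictMono f ∧ ∀ i, f i < a := by
  refine ⟨fun h => ⟨fun i j hij => ?_, fun i => ?_⟩, fun ⟨hf, ha⟩ i j hij => ?_⟩
  · simpa only [Fin.snoc_castSucc] using h (Fin.castSucc_lt_castSucc_iff.2 hij)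
  · simpa only [Fin.snoc_castSucc, Fin.snoc_last] using h (Fin.castSucc_lt_last i)
  · obtain ⟨i, rfl⟩ := Fin.exists_castSucc_eq.2 (hij.trans_le (Fin.le_last j)).ne
    induction j using Fin.lastCases with
    | last => simpa only [Fin.snoc_castSucc, Fin.snoc_last] using ha i
    | cast j =>
      simpa only [Fin.snoc_castSucc] using hf (Fin.castSucc_lt_castSucc_iff.1 hij)

theorem sup_univ_eq_last_of_monotone {α : Type*} [SemilatticeSup α] [OrderBot α] {n : ℕ}
    {f : Fin (n + 1) → α} (hf : Monotone f) : Finset.univ.sup f = f (Fin.last n) :=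
  le_antisymm (Finset.sup_le fun i _ => hf (Fin.le_last i)) (Finset.le_sup (Finset.mem_univ _))

/-- The index tuples of multiple `T`-values: strictly increasing, with the parity of the `i`-th
entry (counted from one) that of `i`. -/
def IsAlternating {n : ℕ} (f : Fin n → ℕ) : Prop :=
  StrictMono f ∧ ∀ i, f i % 2 = ((i : ℕ) + 1) % 2

theorem isAlternating_snoc_iff {n N : ℕ} {f : Fin n → ℕ} :
    IsAlternating (Fin.snoc f N : Fin (n + 1) → ℕ) ↔
      IsAlternating f ∧ Finset.univ.sup f < N ∧ N % 2 = (n + 1) % 2 := by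
  have sup_lt (hN : 0 < N) : Finset.univ.sup f < N ↔ ∀ i, f i < N := by
    simp [Finset.sup_lt_iff hN]
  have pos_of_parity (hf : ∀ i, f i < N) (hN : N % 2 = (n + 1) % 2) : 0 < N := by
    rcases n with _ | n
    · omega
    · exact (f 0).zero_le.trans_lt (hf 0)
  simp only [IsAlternating, strictMono_snoc_iff, Fin.forall_fin_succ', Fin.snoc_castSucc,
    Fin.snoc_last, Fin.val_castSucc, Fin.val_last]
  constructor
  · rintro ⟨⟨hf, hlt⟩, hpar, hN⟩
    exact ⟨⟨hf, hpar⟩, (sup_lt (pos_of_parity hlt hN)).2 hlt, hN⟩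
  · rintro ⟨⟨hf, hpar⟩, hlt, hN⟩
    exact ⟨⟨hf, (sup_lt (Nat.zero_lt_of_lt hlt)).1 hlt⟩, hpar, hN⟩

/-- The sum of `∏ i, w (f i)` over the alternating `n`-tuples `f` with greatest entry `N`.
The greatest entry is `Finset.univ.sup f`, so that of the empty tuple is `0`. -/
def alternatingSum {R : Type*} [Semiring R] (w : ℕ → R) : ℕ → ℕ → R
  | 0, N => if N = 0 then 1 else 0
  | n + 1, N =>
    if N % 2 = (n + 1) % 2 then (∑ M ∈ Finset.range N, alternatingSum w n M) * w N else 0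

section Semiring

variable {R : Type*} [Semiring R] (w : ℕ → R)

theorem alternatingSum_eq_zero_of_parity {n N : ℕ} (h : N % 2 ≠ n % 2) :
    alternatingSum w n N = 0 := by
  cases n with
  | zero => exact if_neg fun hN => h (by rw [hN])
  | succ n => exact if_neg h

theorem alternatingSum_eq_zero_of_lt {n N : ℕ} (h : N < n) : alternatingSum w n N = 0 := by
  induction n generalizing N with
  | zero => omega
  | succ n ih =>
    rw [alternatingSum, Finset.sum_eq_zero fun M hM => ih (by grind), zero_mul, ite_self]

theorem alternatingSum_nonneg [PartialOrder R] [IsOrderedRing R] {w : ℕ → R}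
    (hw : ∀ k, 0 ≤ w k) (n N : ℕ) : 0 ≤ alternatingSum w n N := by
  induction n generalizing N with
  | zero => rw [alternatingSum]; split_ifs <;> simp
  | succ n ih =>
    rw [alternatingSum]
    split_ifs
    · exact mul_nonneg (Finset.sum_nonneg fun M _ => ih M) (hw N)
    · exact le_rfl

end Semiring

theorem alternatingSum_ofReal {w : ℕ → ℝ} (hw : ∀ k, 0 ≤ w k) (n N : ℕ) :
    alternatingSum (fun k => ENNReal.ofReal (w k)) n N =
      ENNReal.ofReal (alternatingSum w n N) := by
  induction n generalizing N with
  | zero => simp only [alternatingSum]; split_ifs <;> simp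
  | succ n ih =>
    simp only [alternatingSum, ih]
    split_ifs
    · rw [ENNReal.ofReal_mul' (hw N),
        ENNReal.ofReal_sum_of_nonneg fun M _ => alternatingSum_nonneg hw n M]
    · exact ENNReal.ofReal_zero.symm

open Classical in
theorem tsum_isAlternating_ennreal (w h : ℕ → ℝ≥0∞) (n : ℕ) :
    ∑' f : Fin n → ℕ,
        (if IsAlternating f then (∏ i, w (f i)) * h (Finset.univ.sup f) else 0) =
      ∑' N, alternatingSum w n N * h N := by
  induction n generalizing h with
  | zero =>
    rw [tsum_eq_single (0 : ℕ) (f := fun N => alternatingSum w 0 N * h N) fun N hN => by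
      rw [alternatingSum, if_neg hN, zero_mul]]
    simp [alternatingSum, IsAlternating, Subsingleton.strictMono]
  | succ n ih =>
    rw [← (Fin.snocEquiv fun _ => ℕ).tsum_eq, ENNReal.tsum_prod']
    refine tsum_congr fun N => ?_
    by_cases hN : N % 2 = (n + 1) % 2
    · have sum_extensions := ih fun M => if M < N then w N * h N else 0
      calc _ = ∑' f : Fin n → ℕ, (if IsAlternating f then
              (∏ i, w (f i)) * (if Finset.univ.sup f < N then w N * h N else 0) else 0) := by
            refine tsum_congr fun f => ?_
            by_cases hf : IsAlternating (Fin.snoc f N : Fin (n + 1) → ℕ)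
            · have hsup := sup_univ_eq_last_of_monotone hf.1.monotone
              obtain ⟨hf', hlt, -⟩ := isAlternating_snoc_iff.1 hf
              simp [hf, hf', hlt, hsup, Fin.snocEquiv, Fin.prod_univ_castSucc, mul_assoc]
            · have : ¬(IsAlternating f ∧ Finset.univ.sup f < N) := fun hf' =>
                hf (isAlternating_snoc_iff.2 ⟨hf'.1, hf'.2, hN⟩)
              simp only [Fin.snocEquiv, Equiv.coe_fn_mk]
              grind
        _ = ∑ M ∈ Finset.range N, alternatingSum w n M * (w N * h N) := by
            rw [sum_extensions, tsum_eq_sum (s := Finset.range N) fun M hM => by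
              rw [if_neg (by simpa using hM), mul_zero]]
            exact Finset.sum_congr rfl fun M hM => by rw [if_pos (Finset.mem_range.1 hM)]
        _ = alternatingSum w (n + 1) N * h N := by
            rw [alternatingSum, if_pos hN, ← Finset.sum_mul, mul_assoc]
    · simp [alternatingSum, hN, Fin.snocEquiv, isAlternating_snoc_iff]

theorem tsum_isAlternating {w h : ℕ → ℝ} (hw : ∀ k, 0 ≤ w k) (hh : ∀ k, 0 ≤ h k) (n : ℕ) :
    ∑' f : {f : Fin n → ℕ // IsAlternating f}, (∏ i, w (f.1 i)) * h (Finset.univ.sup f.1) =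
      ∑' N, alternatingSum w n N * h N := by
  classical
  have key := congrArg ENNReal.toReal <|
    tsum_isAlternating_ennreal (fun k => ENNReal.ofReal (w k)) (fun k => ENNReal.ofReal (h k)) n
  have hprod (f : Fin n → ℕ) : 0 ≤ ∏ i, w (f i) := Finset.prod_nonneg fun i _ => hw _
  simp only [alternatingSum_ofReal hw, ← ENNReal.ofReal_mul (alternatingSum_nonneg hw n _),
    ← ENNReal.ofReal_prod_of_nonneg fun _ _ => hw _, ← ENNReal.ofReal_mul (hprod _)] at key
  rw [ENNReal.tsum_toReal_eq fun f => by split_ifs <;> simp,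
    ENNReal.tsum_toReal_eq fun N => ENNReal.ofReal_ne_top] at key
  simp only [apply_ite ENNReal.toReal, ENNReal.toReal_zero, ENNReal.toReal_ofReal
    (mul_nonneg (hprod _) (hh _)), ENNReal.toReal_ofReal
    (mul_nonneg (alternatingSum_nonneg hw n _) (hh _))] at key
  rw [← key]
  exact tsum_subtype {f | IsAlternating f} fun f => (∏ i, w (f i)) * h (Finset.univ.sup f)

theorem MTV_eq_tsum_isAlternating (k : List ℕ) {r : ℕ} (hr : k.length = r) :
    MTV k = 2 ^ r * ∑' f : {f : Fin r → ℕ // IsAlternating f},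
      ∏ i, (1 : ℝ) / (f.1 i : ℝ) ^ k.get (i.cast hr.symm) := by
  subst hr
  rfl

end Alternating

section Coefficients

/-- The coefficient of `t ^ N` in `log ((1 + t) / (1 - t)) ^ n / n!`, which is also the partial sum
of `T(1, …, 1)` (with `n` ones) over the tuples with greatest entry `N`. -/
noncomputable def cayleyLogCoeff (n N : ℕ) : ℝ := alternatingSum (fun k => 2 / (k : ℝ)) n N

theorem cayleyLogCoeff_nonneg (n N : ℕ) : 0 ≤ cayleyLogCoeff n N :=
  alternatingSum_nonneg (fun k => by positivity) n N

theorem cayleyLogCoeff_eq_zero_of_lt {n N : ℕ} (h : N < n) : cayleyLogCoeff n N = 0 :=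
  alternatingSum_eq_zero_of_lt _ h

theorem cayleyLogCoeff_zero (N : ℕ) : cayleyLogCoeff 0 N = if N = 0 then 1 else 0 := rfl

theorem cayleyLogCoeff_succ_zero (n : ℕ) : cayleyLogCoeff (n + 1) 0 = 0 :=
  cayleyLogCoeff_eq_zero_of_lt n.succ_pos

/-- Comparison of coefficients in `(1 - t ^ 2) * (L ^ (n + 1) / (n + 1)!)' = 2 * (L ^ n / n!)`
for `L = log ((1 + t) / (1 - t))`. -/
theorem cayleyLogCoeff_succ_add_two (n K : ℕ) :
    ((K : ℝ) + 2) * cayleyLogCoeff (n + 1) (K + 2) - K * cayleyLogCoeff (n + 1) K =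
      2 * cayleyLogCoeff n (K + 1) := by
  unfold cayleyLogCoeff
  by_cases h : K % 2 = (n + 1) % 2
  · have h' : (K + 2) % 2 = (n + 1) % 2 := by omega
    have hK : alternatingSum (fun k => 2 / (k : ℝ)) n K = 0 :=
      alternatingSum_eq_zero_of_parity _ (by omega)
    simp only [alternatingSum, if_pos h, if_pos h', Finset.sum_range_succ, hK]
    rcases K.eq_zero_or_pos with rfl | hpos
    · simp
    · push_cast
      field
  · rw [alternatingSum_eq_zero_of_parity _ h, alternatingSum_eq_zero_of_parity _ (by omega),
      alternatingSum_eq_zero_of_parity _ (by omega)]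
    ring

/-- The exponents `1, …, 1, m + 2` distribute as one power of `1 / f i` for each entry and
`m + 1` further powers for the greatest one. -/
theorem MTV_replicate_one_append (n m : ℕ) :
    MTV (List.replicate n 1 ++ [m + 2]) =
      ∑' N : ℕ, cayleyLogCoeff (n + 1) (N + 1) / ((N : ℝ) + 1) ^ (m + 1) := by
  have summand (f : {f : Fin (n + 1) → ℕ // IsAlternating f}) :
      (2 : ℝ) ^ (n + 1) * ∏ i, (1 : ℝ) / (f.1 i : ℝ) ^
          (List.replicate n 1 ++ [m + 2]).get (i.cast (by simp)) =
        (∏ i, 2 / (f.1 i : ℝ)) * (1 / ((Finset.univ.sup f.1 : ℕ) : ℝ) ^ (m + 1)) := by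
    rw [sup_univ_eq_last_of_monotone f.2.1.monotone]
    simp [Fin.prod_univ_castSucc, List.getElem_append, Finset.prod_div_distrib]
    ring
  have sum_tuples := tsum_isAlternating (w := fun k : ℕ => 2 / (k : ℝ))
    (h := fun N : ℕ => 1 / (N : ℝ) ^ (m + 1)) (fun k => by positivity) (fun k => by positivity)
    (n + 1)
  rw [MTV_eq_tsum_isAlternating (r := n + 1) _ (by simp), ← tsum_mul_left, tsum_congr summand,
    sum_tuples]
  have key := (add_left_injective 1).tsum_eq (f := fun N : ℕ =>
    cayleyLogCoeff (n + 1) N * (1 / (N : ℝ) ^ (m + 1))) fun N hN => by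
      rcases N with _ | N
      · simp [cayleyLogCoeff_succ_zero] at hN
      · exact ⟨N, rfl⟩
  exact key.symm.trans (tsum_congr fun N => by push_cast; ring)

/-- The coefficient of `t ^ N` in `((1 + t) / (1 - t)) ^ Y`, obtained by expanding
`exp (Y * log ((1 + t) / (1 - t)))`. -/
noncomputable def cayleyRpowCoeff (Y : ℝ) (N : ℕ) : ℝ :=
  ∑ n ∈ Finset.range (N + 1), cayleyLogCoeff n N * Y ^ n

theorem hasSum_cayleyLogCoeff_mul_pow (Y : ℝ) (N : ℕ) :
    HasSum (fun n => cayleyLogCoeff n N * Y ^ n) (cayleyRpowCoeff Y N) :=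
  hasSum_sum_of_ne_finset_zero fun n hn => by
    rw [cayleyLogCoeff_eq_zero_of_lt (by simpa using hn), zero_mul]

theorem hasSum_cayleyLogCoeff_mul_pow_succ (Y : ℝ) (N : ℕ) :
    HasSum (fun n => cayleyLogCoeff (n + 1) (N + 1) * Y ^ (n + 1)) (cayleyRpowCoeff Y (N + 1)) := by
  simpa [cayleyLogCoeff_zero] using
    (hasSum_nat_add_iff' 1).2 (hasSum_cayleyLogCoeff_mul_pow Y (N + 1))

theorem cayleyRpowCoeff_zero (Y : ℝ) : cayleyRpowCoeff Y 0 = 1 := by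
  simp [cayleyRpowCoeff, cayleyLogCoeff_zero]

theorem cayleyRpowCoeff_one (Y : ℝ) : cayleyRpowCoeff Y 1 = 2 * Y := by
  simp [cayleyRpowCoeff, Finset.sum_range_succ, cayleyLogCoeff, alternatingSum]

theorem cayleyRpowCoeff_add_two (Y : ℝ) (K : ℕ) :
    ((K : ℝ) + 2) * cayleyRpowCoeff Y (K + 2) - K * cayleyRpowCoeff Y K =
      2 * Y * cayleyRpowCoeff Y (K + 1) := by
  have difference := ((hasSum_cayleyLogCoeff_mul_pow Y (K + 2)).mul_left ((K : ℝ) + 2)).sub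
    ((hasSum_cayleyLogCoeff_mul_pow Y K).mul_left (K : ℝ))
  have leading_term : (K : ℝ) * cayleyLogCoeff 0 K = 0 := by
    rcases K with _ | K <;> simp [cayleyLogCoeff_zero]
  have shifted := (hasSum_nat_add_iff' 1).2 difference
  simp only [Finset.sum_range_one, pow_zero, mul_one, leading_term, cayleyLogCoeff_zero (K + 2),
    if_neg (Nat.succ_ne_zero (K + 1)), mul_zero, sub_zero] at shifted
  refine shifted.unique (((hasSum_cayleyLogCoeff_mul_pow Y (K + 1)).mul_left (2 * Y)).congr_fun ?_)
  intro n
  linear_combination Y ^ (n + 1) * cayleyLogCoeff_succ_add_two n K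

theorem abs_cayleyRpowCoeff_le (Y : ℝ) (N : ℕ) :
    |cayleyRpowCoeff Y N| ≤ cayleyRpowCoeff |Y| N := by
  refine (Finset.abs_sum_le_sum_abs _ _).trans_eq (Finset.sum_congr rfl fun n _ => ?_)
  rw [abs_mul, abs_pow, abs_of_nonneg (cayleyLogCoeff_nonneg n N)]

theorem abs_cayleyRpowCoeff_le_two {Y : ℝ} (hY : |Y| ≤ 1) (N : ℕ) :
    |cayleyRpowCoeff Y N| ≤ 2 := by
  induction N using Nat.twoStepInduction with
  | zero => norm_num [cayleyRpowCoeff_zero]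
  | one => rw [cayleyRpowCoeff_one, abs_mul, abs_two]; linarith
  | more K ihK ihK1 =>
    refine le_of_mul_le_mul_left (a := (K : ℝ) + 2) ?_ (by positivity)
    calc ((K : ℝ) + 2) * |cayleyRpowCoeff Y (K + 2)|
        = |K * cayleyRpowCoeff Y K + 2 * Y * cayleyRpowCoeff Y (K + 1)| := by
          rw [← cayleyRpowCoeff_add_two, add_sub_cancel, abs_mul,
            abs_of_nonneg (by positivity : (0 : ℝ) ≤ (K : ℝ) + 2)]
      _ ≤ K * |cayleyRpowCoeff Y K| + 2 * |Y| * |cayleyRpowCoeff Y (K + 1)| := by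
          refine (abs_add_le _ _).trans_eq ?_
          rw [abs_mul, abs_mul, abs_mul, Nat.abs_cast, abs_two]
      _ ≤ K * 2 + 2 * 1 * 2 := by gcongr
      _ = ((K : ℝ) + 2) * 2 := by ring

end Coefficients

section CayleyRpow

/-- The generating function `((1 + t) / (1 - t)) ^ Y`, with the two powers separated so that its
derivative is a sum of products of powers. -/
noncomputable def cayleyRpow (Y t : ℝ) : ℝ := (1 + t) ^ Y * (1 - t) ^ (-Y)

theorem cayleyRpow_zero (Y : ℝ) : cayleyRpow Y 0 = 1 := by simp [cayleyRpow]

theorem cayleyRpow_one {Y : ℝ} (hY : Y ≠ 0) : cayleyRpow Y 1 = 0 := by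
  simp [cayleyRpow, Real.zero_rpow (neg_ne_zero.2 hY)]

theorem cayleyRpow_mul_cayleyRpow_neg (Y : ℝ) {t : ℝ} (ht : t ∈ Set.Ioo (-1) 1) :
    cayleyRpow Y t * cayleyRpow (-Y) t = 1 := by
  have hp : 0 < 1 + t := by linarith [ht.1]
  have hm : 0 < 1 - t := by linarith [ht.2]
  have cancel {x : ℝ} (hx : 0 < x) : x ^ Y * x ^ (-Y) = 1 := by
    rw [← Real.rpow_add hx, add_neg_cancel, Real.rpow_zero]
  unfold cayleyRpow
  rw [neg_neg]
  linear_combination (1 - t) ^ (-Y) * (1 - t) ^ Y * cancel hp + cancel hm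

theorem hasDerivAt_cayleyRpow (Y : ℝ) {t : ℝ} (ht : t ∈ Set.Ioo (-1) 1) :
    HasDerivAt (cayleyRpow Y) (2 * Y * ((1 - t) ^ (-Y - 1) * (1 + t) ^ (Y - 1))) t := by
  have hp : 0 < 1 + t := by linarith [ht.1]
  have hm : 0 < 1 - t := by linarith [ht.2]
  have numerator := ((hasDerivAt_id t).const_add 1).rpow_const (p := Y) (Or.inl hp.ne')
  have denominator := ((hasDerivAt_id t).const_sub 1).rpow_const (p := -Y) (Or.inl hm.ne')
  refine (numerator.mul denominator).congr_deriv ?_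
  simp only [id, Real.rpow_sub_one hp.ne', Real.rpow_sub_one hm.ne']
  field

theorem hasDerivAt_cayleyRpow_logDeriv (Y : ℝ) {t : ℝ} (ht : t ∈ Set.Ioo (-1) 1) :
    HasDerivAt (cayleyRpow Y) (2 * Y / (1 - t ^ 2) * cayleyRpow Y t) t := by
  have hp : 1 + t ≠ 0 := by linarith [ht.1]
  have hm : 1 - t ≠ 0 := by linarith [ht.2]
  refine (hasDerivAt_cayleyRpow Y ht).congr_deriv ?_
  rw [cayleyRpow, Real.rpow_sub_one hp, Real.rpow_sub_one hm,
    show 1 - t ^ 2 = (1 + t) * (1 - t) by ring]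
  field

theorem continuousOn_cayleyRpow (Y : ℝ) : ContinuousOn (cayleyRpow Y) (Set.Ioo (-1) 1) :=
  fun _ ht => (hasDerivAt_cayleyRpow Y ht).continuousAt.continuousWithinAt

theorem eq_mul_cayleyRpow_of_hasDerivAt {Y : ℝ} {G : ℝ → ℝ}
    (hG : ∀ s ∈ Set.Ioo (-1 : ℝ) 1, HasDerivAt G (2 * Y / (1 - s ^ 2) * G s) s)
    {t : ℝ} (ht : t ∈ Set.Ioo (-1) 1) : G t = G 0 * cayleyRpow Y t := by
  have quotient_deriv (s : ℝ) (hs : s ∈ Set.Ioo (-1) 1) :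
      HasDerivAt (fun s => G s * cayleyRpow (-Y) s) 0 s :=
    ((hG s hs).mul (hasDerivAt_cayleyRpow_logDeriv (-Y) hs)).congr_deriv (by ring)
  have quotient_const : G t * cayleyRpow (-Y) t = G 0 * cayleyRpow (-Y) 0 :=
    isOpen_Ioo.is_const_of_deriv_eq_zero isPreconnected_Ioo
      (fun s hs => (quotient_deriv s hs).differentiableAt.differentiableWithinAt)
      (fun s hs => (quotient_deriv s hs).deriv) ht (by norm_num)
  rw [cayleyRpow_zero, mul_one] at quotient_const
  rw [← quotient_const, mul_assoc, mul_comm (cayleyRpow (-Y) t),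
    cayleyRpow_mul_cayleyRpow_neg Y ht, mul_one]

theorem rpow_one_add_sub_rpow_one_sub_le {y t : ℝ} (hy : y ∈ Set.Icc 0 1)
    (ht : t ∈ Set.Ioo 0 1) : (1 + t) ^ y - (1 - t) ^ y ≤ 2 * t := by
  have upper : (1 + t) ^ y ≤ 1 + y * t :=
    rpow_one_add_le_one_add_mul_self (by linarith [ht.1]) hy.1 hy.2
  have lower : (1 - t) ^ (1 : ℝ) ≤ (1 - t) ^ y :=
    Real.rpow_le_rpow_of_exponent_ge (by linarith [ht.2]) (by linarith [ht.1]) hy.2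
  rw [Real.rpow_one] at lower
  nlinarith [ht.1, hy.2]

theorem abs_cayleyRpow_sub_one_le {Y t : ℝ} (hY : |Y| ≤ 1) (ht : t ∈ Set.Ioo 0 1) :
    |cayleyRpow Y t - 1| ≤ 2 * t * (1 - t) ^ (-|Y|) := by
  have hp : 1 ≤ 1 + t := by linarith [ht.1]
  have hm : 0 < 1 - t := by linarith [ht.2]
  have gap := rpow_one_add_sub_rpow_one_sub_le ⟨abs_nonneg Y, hY⟩ ht
  have gap_nonneg : (1 - t) ^ |Y| ≤ (1 + t) ^ |Y| :=
    Real.rpow_le_rpow hm.le (by linarith) (abs_nonneg Y)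
  have cancel {x : ℝ} (hx : 0 < x) : x ^ |Y| * x ^ (-|Y|) = 1 := by
    rw [← Real.rpow_add hx, add_neg_cancel, Real.rpow_zero]
  rcases abs_cases Y with ⟨hY', -⟩ | ⟨hY', -⟩
  · have factored : cayleyRpow Y t - 1 =
        ((1 + t) ^ |Y| - (1 - t) ^ |Y|) * (1 - t) ^ (-|Y|) := by
      rw [sub_mul, cancel hm, hY', cayleyRpow]
    rw [factored, abs_of_nonneg (by have := Real.rpow_nonneg hm.le (-|Y|); nlinarith)]
    gcongr
  · have factored : cayleyRpow Y t - 1 =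
        -(((1 + t) ^ |Y| - (1 - t) ^ |Y|) * (1 + t) ^ (-|Y|)) := by
      rw [sub_mul, cancel (by linarith), hY', neg_neg, cayleyRpow]
      ring
    have : (1 + t) ^ (-|Y|) ≤ (1 - t) ^ (-|Y|) :=
      Real.rpow_le_rpow_of_nonpos hm (by linarith) (neg_nonpos.2 (abs_nonneg Y))
    have := Real.rpow_nonneg (x := 1 + t) (by linarith) (-|Y|)
    rw [factored, abs_neg, abs_of_nonneg (by nlinarith)]
    gcongr
    exact mul_nonneg zero_le_two ht.1.le

end CayleyRpow

section PowerSeries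

variable {𝕜 : Type*} [RCLike 𝕜] {a : ℕ → 𝕜} {C : ℝ} {t : 𝕜}

theorem summable_mul_pow_of_bounded (ha : ∀ n, ‖a n‖ ≤ C) (ht : ‖t‖ < 1) :
    Summable fun n => a n * t ^ n :=
  .of_norm_bounded ((summable_geometric_of_lt_one (norm_nonneg t) ht).mul_left C) fun n => by
    rw [norm_mul, norm_pow]
    gcongr
    exact ha n

theorem summable_natCast_mul_pow_pred {r : ℝ} (hr : |r| < 1) :
    Summable fun n : ℕ => (n : ℝ) * r ^ (n - 1) := by
  rw [← summable_nat_add_iff 1]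
  simpa [add_mul] using (summable_pow_mul_geometric_of_norm_lt_one 1 hr).add
    (summable_geometric_of_abs_lt_one hr)

theorem norm_mul_natCast_mul_pow_pred_le {c : 𝕜} {r : ℝ} (hc : ‖c‖ ≤ C) (ht : ‖t‖ ≤ r) (n : ℕ) :
    ‖c * (n * t ^ (n - 1))‖ ≤ C * (n * r ^ (n - 1)) := by
  rw [norm_mul, norm_mul, norm_pow, RCLike.norm_natCast]
  have := (norm_nonneg c).trans hc
  gcongr

theorem summable_mul_natCast_mul_pow_pred_of_bounded (ha : ∀ n, ‖a n‖ ≤ C) (ht : ‖t‖ < 1) :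
    Summable fun n : ℕ => a n * (n * t ^ (n - 1)) :=
  .of_norm_bounded ((summable_natCast_mul_pow_pred (r := ‖t‖) (by simpa)).mul_left C)
    fun n => norm_mul_natCast_mul_pow_pred_le (ha n) le_rfl n

theorem hasDerivAt_tsum_mul_pow_of_bounded (ha : ∀ n, ‖a n‖ ≤ C) (ht : ‖t‖ < 1) :
    HasDerivAt (fun s => ∑' n, a n * s ^ n) (∑' n : ℕ, a n * (n * t ^ (n - 1))) t := by
  obtain ⟨r, htr, hr⟩ := exists_between ht
  have hr' : |r| < 1 := by rwa [abs_of_pos ((norm_nonneg t).trans_lt htr)]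
  have htr' : t ∈ Metric.ball 0 r := mem_ball_zero_iff.2 htr
  exact hasDerivAt_tsum_of_isPreconnected ((summable_natCast_mul_pow_pred hr').mul_left C)
    Metric.isOpen_ball (convex_ball 0 r).isPreconnected
    (fun n y _ => (hasDerivAt_pow n y).const_mul (a n))
    (fun n y hy => norm_mul_natCast_mul_pow_pred_le (ha n) (mem_ball_zero_iff.1 hy).le n)
    htr' (summable_mul_pow_of_bounded ha ht) htr'

end PowerSeries

section CayleyRpowSeries

variable {Y t : ℝ}

/-- The recurrence for the coefficients is the differential equation
`(1 - t ^ 2) * G' = 2 * Y * G` of their generating function `G`. -/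
theorem hasDerivAt_tsum_cayleyRpowCoeff (hY : |Y| ≤ 1) (ht : |t| < 1) :
    HasDerivAt (fun s => ∑' N, cayleyRpowCoeff Y N * s ^ N)
      (2 * Y / (1 - t ^ 2) * ∑' N, cayleyRpowCoeff Y N * t ^ N) t := by
  have bounded := abs_cayleyRpowCoeff_le_two hY
  refine (hasDerivAt_tsum_mul_pow_of_bounded bounded ht).congr_deriv ?_
  have series := (summable_mul_pow_of_bounded bounded (t := t) ht).hasSum
  have derivative := (summable_mul_natCast_mul_pow_pred_of_bounded bounded (t := t) ht).hasSum
  have series_tail := ((hasSum_nat_add_iff' 1).2 series).mul_left (2 * Y)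
  have ode := ((hasSum_nat_add_iff' 2).2 derivative).sub (derivative.mul_left (t ^ 2))
  have coefficients (K : ℕ) :
      cayleyRpowCoeff Y (K + 2) * (((K + 2 : ℕ) : ℝ) * t ^ (K + 2 - 1)) -
          t ^ 2 * (cayleyRpowCoeff Y K * (K * t ^ (K - 1))) =
        2 * Y * (cayleyRpowCoeff Y (K + 1) * t ^ (K + 1)) := by
    have raise_power : t ^ 2 * (K * t ^ (K - 1)) = K * t ^ (K + 1) := by
      rcases K with _ | K
      · simp
      · rw [Nat.add_sub_cancel]; ring
    rw [Nat.add_sub_assoc one_le_two, Nat.cast_add, Nat.cast_two]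
    linear_combination t ^ (K + 1) * cayleyRpowCoeff_add_two Y K -
      cayleyRpowCoeff Y K * raise_power
  have identity := (series_tail.congr_fun coefficients).unique ode
  simp only [Finset.sum_range_succ, Finset.sum_range_zero, cayleyRpowCoeff_zero,
    cayleyRpowCoeff_one, Nat.cast_zero, Nat.cast_one, pow_zero, Nat.sub_self, zero_mul, mul_zero,
    mul_one, zero_add] at identity
  have hne : 1 - t ^ 2 ≠ 0 := (sub_pos.2 ((sq_lt_one_iff_abs_lt_one t).2 ht)).ne'
  rw [div_mul_eq_mul_div, eq_div_iff hne]
  linear_combination -identity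

theorem hasSum_cayleyRpowCoeff (hY : |Y| ≤ 1) (ht : |t| < 1) :
    HasSum (fun N => cayleyRpowCoeff Y N * t ^ N) (cayleyRpow Y t) := by
  have value_zero : ∑' N, cayleyRpowCoeff Y N * (0 : ℝ) ^ N = 1 := by
    rw [tsum_eq_single 0 fun N hN => by rw [zero_pow hN, mul_zero], cayleyRpowCoeff_zero,
      pow_zero, mul_one]
  have sum_eq := eq_mul_cayleyRpow_of_hasDerivAt
    (fun s hs => hasDerivAt_tsum_cayleyRpowCoeff hY (abs_lt.2 hs)) (abs_lt.1 ht)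
  rw [value_zero, one_mul] at sum_eq
  exact sum_eq ▸ (summable_mul_pow_of_bounded (abs_cayleyRpowCoeff_le_two hY) (t := t) ht).hasSum

theorem hasSum_cayleyRpowCoeff_succ (hY : |Y| ≤ 1) (ht : |t| < 1) :
    HasSum (fun N => cayleyRpowCoeff Y (N + 1) * t ^ (N + 1)) (cayleyRpow Y t - 1) := by
  simpa [cayleyRpowCoeff_zero] using (hasSum_nat_add_iff' 1).2 (hasSum_cayleyRpowCoeff hY ht)

end CayleyRpowSeries

section Integrals

open Set

variable {X Y : ℝ}

theorem integral_Ioo_zero_one_rpow {s : ℝ} (hs : -1 < s) :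
    ∫ t in Ioo (0 : ℝ) 1, t ^ s = 1 / (s + 1) := by
  rw [← integral_Ioc_eq_integral_Ioo, ← intervalIntegral.integral_of_le zero_le_one,
    integral_rpow (Or.inl hs), Real.one_rpow, Real.zero_rpow (by linarith), sub_zero]

theorem integrableOn_rpow_mul_one_sub_rpow {a b : ℝ} (ha : -1 < a) (hb : -1 < b) :
    IntegrableOn (fun t : ℝ => t ^ a * (1 - t) ^ b) (Ioo 0 1) := by
  have beta := (Complex.betaIntegral_convergent (u := ((a + 1 : ℝ) : ℂ)) (v := ((b + 1 : ℝ) : ℂ))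
    (by rw [Complex.ofReal_re]; linarith) (by rw [Complex.ofReal_re]; linarith)).norm
  rw [intervalIntegrable_iff_integrableOn_Ioo_of_le zero_le_one] at beta
  refine beta.congr_fun (fun t ht => ?_) measurableSet_Ioo
  have norm_cpow {x c : ℝ} (hx : 0 < x) : ‖(x : ℂ) ^ (((c + 1 : ℝ) : ℂ) - 1)‖ = x ^ c := by
    simp [Complex.norm_cpow_eq_rpow_re_of_pos hx]
  simp only [norm_mul]
  rw [norm_cpow ht.1, ← Complex.ofReal_one, ← Complex.ofReal_sub, Complex.ofReal_one,
    norm_cpow (sub_pos.2 ht.2)]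

theorem integrableOn_cayleyRpow_sub_one_mul_rpow (hX : X < 1) (hY : |Y| < 1) :
    IntegrableOn (fun t => (cayleyRpow Y t - 1) * t ^ (-X - 1)) (Ioo 0 1) := by
  refine ((integrableOn_rpow_mul_one_sub_rpow (a := -X) (b := -|Y|) (by linarith)
    (by linarith)).const_mul 2).mono' ?_ ?_
  · refine ContinuousOn.aestronglyMeasurable ?_ measurableSet_Ioo
    refine (((continuousOn_cayleyRpow Y).mono ?_).sub continuousOn_const).mul
      (continuousOn_id.rpow_const fun t ht => Or.inl ht.1.ne')
    exact Ioo_subset_Ioo_left (by norm_num)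
  · filter_upwards [ae_restrict_mem measurableSet_Ioo] with t ht
    have hpow : t ^ (-X) = t ^ (-X - 1) * t := by
      rw [← Real.rpow_add_one ht.1.ne', sub_add_cancel]
    rw [norm_mul, Real.norm_eq_abs, Real.norm_of_nonneg (Real.rpow_nonneg ht.1.le _), hpow]
    calc |cayleyRpow Y t - 1| * t ^ (-X - 1) ≤ 2 * t * (1 - t) ^ (-|Y|) * t ^ (-X - 1) :=
          mul_le_mul_of_nonneg_right (abs_cayleyRpow_sub_one_le hY.le ht)
            (Real.rpow_nonneg ht.1.le _)
      _ = 2 * (t ^ (-X - 1) * t * (1 - t) ^ (-|Y|)) := by ring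

theorem integrableOn_rpow_mul_cayleyRpow_deriv (hX : X < 1) (hY : Y < 0) :
    IntegrableOn (fun t : ℝ => t ^ (-X) * (1 - t) ^ (-Y - 1) * (1 + t) ^ (Y - 1)) (Ioo 0 1) := by
  have bounded_factor : ContinuousOn (fun t : ℝ => (1 + t) ^ (Y - 1)) (Icc 0 1) :=
    ContinuousOn.rpow_const (by fun_prop) fun t ht => Or.inl (by linarith [ht.1])
  have beta := integrableOn_rpow_mul_one_sub_rpow (a := -X) (b := -Y - 1) (by linarith)
    (by linarith)
  rw [← integrableOn_Icc_iff_integrableOn_Ioo] at beta ⊢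
  exact beta.mul_continuousOn bounded_factor isCompact_Icc

/-- Termwise integration, dominated by the nonnegative series of `cayleyRpow |Y|`. -/
theorem hasSum_cayleyRpowCoeff_div (hX : X < 1) (hY : |Y| < 1) :
    HasSum (fun N : ℕ => cayleyRpowCoeff Y (N + 1) / ((N : ℝ) + 1 - X))
      (∫ t in Ioo (0 : ℝ) 1, (cayleyRpow Y t - 1) * t ^ (-X - 1)) := by
  have series {y t : ℝ} (hy : |y| < 1) (ht : t ∈ Ioo 0 1) :
      HasSum (fun N : ℕ => cayleyRpowCoeff y (N + 1) * t ^ ((N : ℝ) - X))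
        ((cayleyRpow y t - 1) * t ^ (-X - 1)) := by
    refine ((hasSum_cayleyRpowCoeff_succ hy.le (abs_lt.2 ⟨by linarith [ht.1], ht.2⟩)).mul_right
      (t ^ (-X - 1))).congr_fun fun N => ?_
    rw [mul_assoc, ← Real.rpow_natCast, ← Real.rpow_add ht.1]
    congr 2
    push_cast
    ring
  have moment (N : ℕ) : ∫ t in Ioo (0 : ℝ) 1, cayleyRpowCoeff Y (N + 1) * t ^ ((N : ℝ) - X) =
      cayleyRpowCoeff Y (N + 1) / ((N : ℝ) + 1 - X) := by
    rw [integral_const_mul, integral_Ioo_zero_one_rpow (by linarith [N.cast_nonneg (α := ℝ)]),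
      mul_one_div, sub_add_eq_add_sub]
  have hY' : |(|Y|)| < 1 := by rwa [abs_abs]
  have on_Ioo := ae_restrict_mem (μ := volume) (measurableSet_Ioo (a := (0 : ℝ)) (b := 1))
  simp only [← moment]
  refine hasSum_integral_of_dominated_convergence
    (fun N t => cayleyRpowCoeff |Y| (N + 1) * t ^ ((N : ℝ) - X))
    (fun N => ?_) (fun N => ?_) ?_ ?_ ?_
  · exact (measurable_id.pow_const _).const_mul _ |>.aestronglyMeasurable
  · filter_upwards [on_Ioo] with t ht
    have := Real.rpow_nonneg ht.1.le (N - X)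
    rw [norm_mul, Real.norm_of_nonneg this]
    exact mul_le_mul_of_nonneg_right (abs_cayleyRpowCoeff_le Y (N + 1)) this
  · filter_upwards [on_Ioo] with t ht using (series hY' ht).summable
  · exact (integrableOn_cayleyRpow_sub_one_mul_rpow hX hY').congr_fun
      (fun t ht => (series hY' ht).tsum_eq.symm) measurableSet_Ioo
  · filter_upwards [on_Ioo] with t ht using series hY ht

open Filter Topology

theorem tendsto_cayleyRpow_sub_one_mul_rpow_zero (hX : X < 1) (hY : |Y| ≤ 1) :
    Tendsto (fun t => (cayleyRpow Y t - 1) * t ^ (-X)) (𝓝[>] 0) (𝓝 0) := by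
  have majorant : ContinuousAt (fun t : ℝ => 2 * t ^ (1 - X) * (1 - t) ^ (-|Y|)) 0 :=
    (continuousAt_const.mul (Real.continuousAt_rpow_const _ _ (Or.inr (by linarith)))).mul
      (ContinuousAt.rpow_const (by fun_prop) (Or.inl (by norm_num)))
  have majorant_zero := majorant.tendsto.mono_left (nhdsWithin_le_nhds (s := Ioi 0))
  rw [Real.zero_rpow (by linarith), mul_zero, zero_mul] at majorant_zero
  refine squeeze_zero_norm' ?_ majorant_zero
  filter_upwards [Ioo_mem_nhdsGT (zero_lt_one (α := ℝ))] with t ht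
  rw [norm_mul, Real.norm_eq_abs, Real.norm_of_nonneg (Real.rpow_nonneg ht.1.le _)]
  calc |cayleyRpow Y t - 1| * t ^ (-X) ≤ 2 * t * (1 - t) ^ (-|Y|) * t ^ (-X) :=
        mul_le_mul_of_nonneg_right (abs_cayleyRpow_sub_one_le hY ht) (Real.rpow_nonneg ht.1.le _)
    _ = 2 * t ^ (1 - X) * (1 - t) ^ (-|Y|) := by
        rw [sub_eq_add_neg 1 X, Real.rpow_add ht.1, Real.rpow_one]
        ring

theorem tendsto_cayleyRpow_sub_one_mul_rpow_one (X : ℝ) (hY : Y < 0) :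
    Tendsto (fun t => (cayleyRpow Y t - 1) * t ^ (-X)) (𝓝[<] 1) (𝓝 (-1)) := by
  have continuous_at_one : ContinuousAt (fun t => (cayleyRpow Y t - 1) * t ^ (-X)) 1 := by
    refine (ContinuousAt.sub (ContinuousAt.mul ?_ ?_) continuousAt_const).mul
      (Real.continuousAt_rpow_const _ _ (Or.inl one_ne_zero))
    · exact ContinuousAt.rpow_const (by fun_prop) (Or.inl (by norm_num))
    · exact ContinuousAt.rpow_const (by fun_prop) (Or.inr (by linarith))
  have limit := continuous_at_one.tendsto.mono_left (nhdsWithin_le_nhds (s := Iio 1))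
  rwa [cayleyRpow_one hY.ne, zero_sub, Real.one_rpow, mul_one] at limit

theorem integral_cayleyRpow_by_parts (hX : X < 1) (hY : Y ∈ Ioo (-1) 0) :
    X * (∫ t in Ioo (0 : ℝ) 1, (cayleyRpow Y t - 1) * t ^ (-X - 1)) =
      2 * Y * (∫ t in Ioo (0 : ℝ) 1, t ^ (-X) * (1 - t) ^ (-Y - 1) * (1 + t) ^ (Y - 1)) + 1 := by
  have hY' : |Y| < 1 := abs_lt.2 ⟨hY.1, hY.2.trans one_pos⟩
  have integrable_left :=
    (integrableOn_rpow_mul_cayleyRpow_deriv hX hY.2).const_mul (2 * Y)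
  have integrable_right := (integrableOn_cayleyRpow_sub_one_mul_rpow hX hY').const_mul X
  have product_rule (t : ℝ) (ht : t ∈ Ioo 0 1) :
      HasDerivAt (fun t => (cayleyRpow Y t - 1) * t ^ (-X))
        (2 * Y * (t ^ (-X) * (1 - t) ^ (-Y - 1) * (1 + t) ^ (Y - 1)) -
          X * ((cayleyRpow Y t - 1) * t ^ (-X - 1))) t :=
    (((hasDerivAt_cayleyRpow Y ⟨by linarith [ht.1], ht.2⟩).sub_const 1).mul
      (Real.hasDerivAt_rpow_const (Or.inl ht.1.ne'))).congr_deriv (by ring)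
  have boundary := intervalIntegral.integral_eq_sub_of_hasDerivAt_of_tendsto zero_lt_one
    product_rule
    ((intervalIntegrable_iff_integrableOn_Ioo_of_le zero_le_one).2
      (integrable_left.sub integrable_right))
    (tendsto_cayleyRpow_sub_one_mul_rpow_zero hX hY'.le)
    (tendsto_cayleyRpow_sub_one_mul_rpow_one X hY.2)
  rw [intervalIntegral.integral_of_le zero_le_one, integral_Ioc_eq_integral_Ioo,
    integral_sub integrable_left integrable_right, integral_const_mul,
    integral_const_mul] at boundary
  linear_combination -boundary

end Integrals

section GeneratingSeries

variable {X Y : ℝ}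

theorem hasSum_div_pow_succ {x : ℝ} (hX : |X| < x) :
    HasSum (fun m : ℕ => (X / x) ^ (m + 1)) (X / (x - X)) := by
  have hx : 0 < x := (abs_nonneg X).trans_lt hX
  have ratio : |X / x| < 1 := by rwa [abs_div, abs_of_pos hx, div_lt_one hx]
  have hne : x - X ≠ 0 := (sub_pos.2 (lt_of_abs_lt hX)).ne'
  have value : X / x * (1 - X / x)⁻¹ = X / (x - X) := by
    rw [one_sub_div hx.ne']
    field
  rw [← value]
  exact ((hasSum_geometric_of_abs_lt_one ratio).mul_left (X / x)).congr_fun fun m => pow_succ' _ m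

theorem hasSum_mul_real {ι κ : Type*} {f : ι → ℝ} {g : κ → ℝ} {a b : ℝ} (hf : HasSum f a)
    (hg : HasSum g b) : HasSum (fun p : ι × κ => f p.1 * g p.2) (a * b) :=
  hf.mul hg (summable_mul_of_summable_norm hf.summable.norm hg.summable.norm)

/-- The contribution to the coefficient pair `p = (m, n)` of the generating series, multiplied by
`Y`, of the index tuples with greatest entry `N + 1`. -/
noncomputable def heightOneTerm (X Y : ℝ) (N : ℕ) (p : ℕ × ℕ) : ℝ :=
  (X / ((N : ℝ) + 1)) ^ (p.1 + 1) * (cayleyLogCoeff (p.2 + 1) (N + 1) * Y ^ (p.2 + 1))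

theorem abs_heightOneTerm (X Y : ℝ) (N : ℕ) (p : ℕ × ℕ) :
    |heightOneTerm X Y N p| = heightOneTerm |X| |Y| N p := by
  simp only [heightOneTerm, abs_mul, abs_pow, abs_div, abs_of_nonneg (cayleyLogCoeff_nonneg _ _)]
  rw [abs_of_nonneg (by positivity : (0 : ℝ) ≤ (N : ℝ) + 1)]

theorem tsum_heightOneTerm (X Y : ℝ) (p : ℕ × ℕ) :
    ∑' N, heightOneTerm X Y N p =
      MTV (List.replicate p.2 1 ++ [p.1 + 2]) * X ^ (p.1 + 1) * Y ^ (p.2 + 1) := by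
  rw [MTV_replicate_one_append, ← tsum_mul_right, ← tsum_mul_right]
  refine tsum_congr fun N => ?_
  rw [heightOneTerm, div_pow]
  ring

theorem hasSum_heightOneTerm (hX : |X| < 1) (Y : ℝ) (N : ℕ) :
    HasSum (heightOneTerm X Y N) (X * (cayleyRpowCoeff Y (N + 1) / ((N : ℝ) + 1 - X))) := by
  have product := hasSum_mul_real
    (hasSum_div_pow_succ (X := X) (x := (N : ℝ) + 1) (by linarith [N.cast_nonneg (α := ℝ)]))
    (hasSum_cayleyLogCoeff_mul_pow_succ Y N)
  rw [← mul_div_assoc, mul_div_right_comm]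
  exact product

theorem summable_heightOneTerm (hX : |X| < 1) (hY : |Y| < 1) :
    Summable fun q : ℕ × ℕ × ℕ => heightOneTerm X Y q.1 q.2 := by
  have hX' : |(|X|)| < 1 := by rwa [abs_abs]
  have hY' : |(|Y|)| < 1 := by rwa [abs_abs]
  refine Summable.of_norm ?_
  simp only [Real.norm_eq_abs, abs_heightOneTerm]
  refine (summable_prod_of_nonneg fun q => ?_).2
    ⟨fun N => (hasSum_heightOneTerm hX' |Y| N).summable, ?_⟩
  · exact (abs_heightOneTerm X Y q.1 q.2).symm ▸ abs_nonneg _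
  · simp only [(hasSum_heightOneTerm hX' |Y| _).tsum_eq]
    exact (hasSum_cayleyRpowCoeff_div (lt_of_abs_lt hX') hY').summable.mul_left |X|

theorem hasSum_swap_of_fiberwise {ι κ E : Type*} [NormedAddCommGroup E] [CompleteSpace E]
    {f : ι × κ → E} {g : ι → E} {a : E}
    (hf : Summable f) (hg : ∀ i, HasSum (fun k => f (i, k)) (g i)) (ha : HasSum g a) :
    HasSum (fun k => ∑' i, f (i, k)) a := by
  have total : HasSum f a := (hf.hasSum.prod_fiberwise hg).unique ha ▸ hf.hasSum
  have swapped : HasSum (f ∘ Prod.swap) a := (Equiv.prodComm κ ι).hasSum_iff.2 total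
  exact swapped.prod_fiberwise fun k => (swapped.summable.prod_factor k).hasSum

theorem hasSum_MTV_height_one (hX : |X| < 1) (hY : |Y| < 1) :
    HasSum (fun p : ℕ × ℕ =>
        MTV (List.replicate p.2 1 ++ [p.1 + 2]) * X ^ (p.1 + 1) * Y ^ (p.2 + 1))
      (X * ∫ t in Set.Ioo (0 : ℝ) 1, (cayleyRpow Y t - 1) * t ^ (-X - 1)) := by
  simp only [← tsum_heightOneTerm]
  exact hasSum_swap_of_fiberwise (summable_heightOneTerm hX hY) (hasSum_heightOneTerm hX Y)
    ((hasSum_cayleyRpowCoeff_div (lt_of_abs_lt hX) hY).mul_left X)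

end GeneratingSeries

/-- **Theorem (generating series of height-one multiple T-values).**
For `|X| < 1` and `−1 < Y < 0`,
`∑_{m,n ≥ 1} T(1^{n−1}, m+1) X^m Y^{n−1} = 2 ∫₀¹ t^{−X} (1−t)^{−Y−1} (1+t)^{Y−1} dt + 1/Y`.
(The pair `p = (p₁, p₂)` below corresponds to `(m, n) = (p₁ + 1, p₂ + 1)`.) -/
theorem MTV_height_one_generating (X Y : ℝ) (hX : |X| < 1) (hY₁ : -1 < Y) (hY₂ : Y < 0) :
    (∑' p : ℕ × ℕ,
        MTV (List.replicate p.2 1 ++ [p.1 + 2]) * X ^ (p.1 + 1) * Y ^ p.2)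
      = 2 * (∫ t in Set.Ioo (0 : ℝ) 1,
          t ^ (-X) * (1 - t) ^ (-Y - 1) * (1 + t) ^ (Y - 1)) + 1 / Y := by
  have series := (hasSum_MTV_height_one hX (abs_lt.2 ⟨hY₁, hY₂.trans one_pos⟩)).tsum_eq
  rw [integral_cayleyRpow_by_parts (lt_of_abs_lt hX) ⟨hY₁, hY₂⟩] at series
  simp only [pow_succ Y, ← mul_assoc] at series
  rw [tsum_mul_right] at series
  rw [eq_div_of_mul_eq hY₂.ne series]
  field [hY₂.ne]
end

section
/- Single-integral expression for height-one multiple T-values: for integers m ≥ 1 and n ≥ 1, T(1,...,1,m+1) (with n−1 ones before m+1) = 1/((n−1)! · m!) · ∫_0^1 (log((1+t)/(1−t)))^{n−1} · (log(1/t))^m · (2/(1−t²)) dt. -/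
open MeasureTheory

/-!
Summing over the largest index of a chain amounts to multiplying a generating function by
`∑ₖ 2 t^{2k} = 2 / (1 - t²)`, which is the derivative of `L(t) = log ((1 + t) / (1 - t))`. Hence
`∑ ∏ᵢ (2 / mᵢ) · t^{mₙ}`, summed over the chains `m₁ < ⋯ < mₙ` with `mᵢ ≡ i (mod 2)`, equals
`L(t)ⁿ / n!`. Multiplying once more by `2 / (1 - t²)` and integrating against `log (1/t)^m` term by
term, with `∫₀¹ t^{j-1} log (1/t)^m dt = m! / j^{m+1}`, gives the height-one `T`-value. All terms
are nonnegative, so in `ℝ≥0∞` every interchange of sum and integral is unconditional.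
-/

open scoped ENNReal

/-- The chains `m₁ < ⋯ < m_r` of natural numbers with `m_i ≡ i (mod 2)` over which the multiple
`T`-values of depth `r` are summed; the entry `m_i` is the value at `i - 1 : Fin r`. -/
abbrev TIndex (r : ℕ) : Type :=
  {f : Fin r → ℕ // StrictMono f ∧ ∀ i, f i % 2 = ((i : ℕ) + 1) % 2}

lemma strictMono_snoc_of_forall_lt {α : Type*} [Preorder α] {n : ℕ} {f : Fin n → α} {a : α}
    (hf : StrictMono f) (ha : ∀ i, f i < a) : StrictMono (Fin.snoc f a : Fin (n + 1) → α) := by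
  intro i j hij
  induction j using Fin.lastCases with
  | last =>
    obtain ⟨i, rfl⟩ := Fin.exists_castSucc_eq.2 hij.ne
    simpa using ha i
  | cast j =>
    obtain ⟨i, rfl⟩ := Fin.exists_castSucc_eq.2 (hij.trans (Fin.castSucc_lt_last j)).ne
    simpa using hf (Fin.castSucc_lt_castSucc_iff.1 hij)

namespace TIndex

variable {n : ℕ}

/-- The largest entry `m_r` of a chain, with value `0` on the empty chain. -/
def top (f : TIndex n) : ℕ := Finset.univ.sup f.1

lemma le_top (f : TIndex n) (i : Fin n) : f.1 i ≤ f.top :=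
  Finset.le_sup (Finset.mem_univ i)

lemma top_eq_apply_last (f : TIndex (n + 1)) : f.top = f.1 (Fin.last n) :=
  le_antisymm (Finset.sup_le fun i _ => f.2.1.monotone (Fin.le_last i)) (f.le_top _)

lemma top_mod_two (f : TIndex n) : f.top % 2 = n % 2 := by
  cases n with
  | zero => simp [top]
  | succ n => simpa [top_eq_apply_last] using f.2.2 (Fin.last n)

lemma apply_pos (f : TIndex n) (i : Fin n) : 0 < f.1 i := by
  cases n with
  | zero => exact i.elim0
  | succ n =>
    have h_odd : f.1 0 % 2 = 1 := by simpa using f.2.2 0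
    have h_le : f.1 0 ≤ f.1 i := f.2.1.monotone (Fin.zero_le i)
    omega

/-- The chain without its largest entry. -/
def init (g : TIndex (n + 1)) : TIndex n :=
  ⟨Fin.init g.1, g.2.1.comp Fin.strictMono_castSucc, fun i => g.2.2 i.castSucc⟩

lemma top_init_lt (g : TIndex (n + 1)) : g.init.top < g.1 (Fin.last n) :=
  (Finset.sup_lt_iff (g.apply_pos _)).2 fun i _ => g.2.1 i.castSucc_lt_last

/-- The chain extended by a new largest entry; the parity condition makes `f.top + 1 + 2 * k` the
`k`-th admissible choice. -/
def snoc (f : TIndex n) (k : ℕ) : TIndex (n + 1) where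
  val := Fin.snoc f.1 (f.top + 1 + 2 * k)
  property := by
    refine ⟨strictMono_snoc_of_forall_lt f.2.1 fun i => ?_, fun i => ?_⟩
    · have := f.le_top i
      omega
    · induction i using Fin.lastCases with
      | last =>
        have := f.top_mod_two
        rw [Fin.snoc_last, Fin.val_last]
        omega
      | cast i => simpa using f.2.2 i

lemma snoc_apply_last (f : TIndex n) (k : ℕ) : (f.snoc k).1 (Fin.last n) = f.top + 1 + 2 * k :=
  Fin.snoc_last (α := fun _ => ℕ) ..

lemma init_snoc (f : TIndex n) (k : ℕ) : (f.snoc k).init = f :=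
  Subtype.ext (Fin.init_snoc (α := fun _ => ℕ) ..)

/-- A chain of length `n + 1` is a chain of length `n` together with the position of its largest
entry among the admissible ones. -/
def snocEquiv (n : ℕ) : TIndex n × ℕ ≃ TIndex (n + 1) where
  toFun p := p.1.snoc p.2
  invFun g := (g.init, (g.1 (Fin.last n) - g.init.top - 1) / 2)
  left_inv p := by
    refine Prod.ext (init_snoc ..) ?_
    simp only [init_snoc, snoc_apply_last]
    omega
  right_inv g := by
    have h_lt := g.top_init_lt
    have h_init := g.init.top_mod_two
    have h_last : g.1 (Fin.last n) % 2 = (n + 1) % 2 := g.2.2 (Fin.last n)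
    have h_eq : g.init.top + 1 + 2 * ((g.1 (Fin.last n) - g.init.top - 1) / 2)
        = g.1 (Fin.last n) := by omega
    refine Subtype.ext ?_
    simp only [snoc, h_eq]
    exact Fin.snoc_init_self g.1

lemma tsum_succ (F : TIndex n → ℕ → ℝ≥0∞) :
    ∑' g : TIndex (n + 1), F g.init (g.1 (Fin.last n))
      = ∑' (f : TIndex n) (k : ℕ), F f (f.top + 1 + 2 * k) := by
  rw [← (snocEquiv n).tsum_eq, ENNReal.tsum_prod']
  simp only [snocEquiv, Equiv.coe_fn_mk, init_snoc, snoc_apply_last]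

end TIndex

lemma tsum_two_mul_pow_two_mul (x : ℝ≥0∞) : ∑' k : ℕ, 2 * x ^ (2 * k) = 2 / (1 - x ^ 2) := by
  simp only [pow_mul, ENNReal.tsum_mul_left, ENNReal.tsum_geometric, div_eq_mul_inv]

section TermwiseIntegration

variable {n : ℕ} (w : TIndex n → ℝ≥0∞)

lemma tsum_mul_pow_top_mul_two_div (x : ℝ≥0∞) :
    (∑' f, w f * x ^ f.top) * (2 / (1 - x ^ 2))
      = ∑' g : TIndex (n + 1), w g.init * (2 * x ^ (g.1 (Fin.last n) - 1)) := by
  rw [TIndex.tsum_succ fun f j => w f * (2 * x ^ (j - 1)), ← tsum_two_mul_pow_two_mul,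
    ← ENNReal.tsum_mul_right]
  refine tsum_congr fun f => ?_
  rw [← ENNReal.tsum_mul_left]
  refine tsum_congr fun k => ?_
  rw [show f.top + 1 + 2 * k - 1 = f.top + 2 * k by omega, pow_add]
  ring

lemma lintegral_tsum_mul_pow_top_mul_two_div {α : Type*} [MeasurableSpace α] {μ : Measure α}
    {X φ : α → ℝ≥0∞} (hX : Measurable X) (hφ : Measurable φ) :
    ∫⁻ a, (∑' f, w f * X a ^ f.top) * (2 / (1 - X a ^ 2)) * φ a ∂μ
      = ∑' g : TIndex (n + 1),
          w g.init * (2 * ∫⁻ a, X a ^ (g.1 (Fin.last n) - 1) * φ a ∂μ) := by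
  simp_rw [tsum_mul_pow_top_mul_two_div, ← ENNReal.tsum_mul_right, mul_assoc]
  rw [lintegral_tsum fun g => by fun_prop]
  refine tsum_congr fun g => ?_
  rw [lintegral_const_mul _ (by fun_prop), lintegral_const_mul _ (by fun_prop)]

end TermwiseIntegration

lemma lintegral_Ioo_ofReal_deriv_of_nonneg {f f' : ℝ → ℝ} {a b : ℝ} (hab : a ≤ b)
    (hcont : ContinuousOn f (Set.Icc a b)) (hderiv : ∀ x ∈ Set.Ioo a b, HasDerivAt f (f' x) x)
    (hnonneg : ∀ x ∈ Set.Ioo a b, 0 ≤ f' x) :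
    ∫⁻ x in Set.Ioo a b, ENNReal.ofReal (f' x) = ENNReal.ofReal (f b - f a) := by
  have hint : IntegrableOn f' (Set.Ioc a b) :=
    intervalIntegral.integrableOn_deriv_of_nonneg hcont hderiv hnonneg
  rw [← ofReal_integral_eq_lintegral_ofReal (hint.mono_set Set.Ioo_subset_Ioc_self)
      (ae_restrict_of_forall_mem measurableSet_Ioo hnonneg),
    ← integral_Ioc_eq_integral_Ioo, ← intervalIntegral.integral_of_le hab,
    intervalIntegral.integral_eq_sub_of_hasDerivAt_of_le hab hcont hderiv
      ((intervalIntegrable_iff_integrableOn_Ioc_of_le hab).2 hint)]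

lemma lintegral_Ioo_ofReal_pow_pred {x : ℝ} (hx : 0 ≤ x) {j : ℕ} (hj : 0 < j) :
    ∫⁻ t in Set.Ioo 0 x, ENNReal.ofReal t ^ (j - 1) = ENNReal.ofReal x ^ j / j := by
  have hderiv (t : ℝ) : HasDerivAt (fun t : ℝ => t ^ j / j) (t ^ (j - 1)) t :=
    ((hasDerivAt_pow j t).div_const _).congr_deriv (by field_simp)
  calc ∫⁻ t in Set.Ioo 0 x, ENNReal.ofReal t ^ (j - 1)
    _ = ∫⁻ t in Set.Ioo 0 x, ENNReal.ofReal (t ^ (j - 1)) :=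
      setLIntegral_congr_fun measurableSet_Ioo fun t ht => (ENNReal.ofReal_pow ht.1.le _).symm
    _ = ENNReal.ofReal (x ^ j / j - 0 ^ j / j) :=
      lintegral_Ioo_ofReal_deriv_of_nonneg hx (by fun_prop) (fun t _ => hderiv t)
        fun t ht => pow_nonneg ht.1.le _
    _ = ENNReal.ofReal x ^ j / j := by
      rw [zero_pow hj.ne', zero_div, sub_zero, ENNReal.ofReal_div_of_pos (by positivity),
        ENNReal.ofReal_pow hx, ENNReal.ofReal_natCast]

lemma lintegral_Ioo_zero_one_eq_lintegral_exp_neg (φ : ℝ → ℝ≥0∞) :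
    ∫⁻ t in Set.Ioo 0 1, φ t
      = ∫⁻ u in Set.Ioi 0, ENNReal.ofReal (Real.exp (-u)) * φ (Real.exp (-u)) := by
  have himage : (fun u : ℝ => Real.exp (-u)) '' Set.Ioi 0 = Set.Ioo 0 1 := by
    rw [← Function.comp_def, Set.image_comp, Set.image_neg_eq_neg, Set.neg_Ioi, neg_zero,
      Real.image_exp_Iio, Real.exp_zero]
  have hderiv (u : ℝ) : HasDerivAt (fun u => Real.exp (-u)) (-Real.exp (-u)) u := by
    simpa using (hasDerivAt_neg u).exp
  rw [← himage, lintegral_image_eq_lintegral_abs_deriv_mul measurableSet_Ioi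
    (fun u _ => (hderiv u).hasDerivWithinAt) (Real.exp_injective.comp neg_injective).injOn]
  simp only [abs_neg, Real.abs_exp]

lemma lintegral_Ioi_ofReal_pow_mul_exp_neg_mul (m : ℕ) {r : ℝ} (hr : 0 < r) :
    ∫⁻ u in Set.Ioi 0, ENNReal.ofReal (u ^ m * Real.exp (-(r * u)))
      = ENNReal.ofReal (m.factorial / r ^ (m + 1)) := by
  have hGamma : ∫ u in Set.Ioi 0, u ^ m * Real.exp (-(r * u)) = m.factorial / r ^ (m + 1) := by
    have := Real.integral_rpow_mul_exp_neg_mul_Ioi (a := m + 1) (by positivity) hr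
    rw [Real.Gamma_nat_eq_factorial, add_sub_cancel_right, ← Nat.cast_add_one] at this
    simpa only [Real.rpow_natCast, one_div, inv_pow, ← div_eq_inv_mul] using this
  rw [← hGamma, ofReal_integral_eq_lintegral_ofReal]
  · exact .of_integral_ne_zero (by rw [hGamma]; positivity)
  · exact ae_restrict_of_forall_mem measurableSet_Ioi fun u hu =>
      mul_nonneg (pow_nonneg (le_of_lt hu) m) (Real.exp_nonneg _)

lemma lintegral_Ioo_pow_pred_mul_log_pow (m : ℕ) {j : ℕ} (hj : 0 < j) :
    ∫⁻ t in Set.Ioo (0 : ℝ) 1,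
        ENNReal.ofReal t ^ (j - 1) * ENNReal.ofReal (Real.log (1 / t) ^ m)
      = m.factorial / j ^ (m + 1) := by
  have hj' : (0 : ℝ) < j := Nat.cast_pos.2 hj
  have hint (u : ℝ) (_ : u ∈ Set.Ioi 0) :
      ENNReal.ofReal (Real.exp (-u)) * (ENNReal.ofReal (Real.exp (-u)) ^ (j - 1)
          * ENNReal.ofReal (Real.log (1 / Real.exp (-u)) ^ m))
        = ENNReal.ofReal (u ^ m * Real.exp (-(j * u))) := by
    rw [← mul_assoc, mul_pow_sub_one hj.ne', ← ENNReal.ofReal_pow (Real.exp_nonneg _),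
      ← ENNReal.ofReal_mul (by positivity), ← Real.exp_nat_mul, one_div, ← Real.exp_neg, neg_neg,
      Real.log_exp, mul_neg, mul_comm]
  rw [lintegral_Ioo_zero_one_eq_lintegral_exp_neg, setLIntegral_congr_fun measurableSet_Ioi hint,
    lintegral_Ioi_ofReal_pow_mul_exp_neg_mul m hj', ENNReal.ofReal_div_of_pos (by positivity),
    ENNReal.ofReal_pow hj'.le, ENNReal.ofReal_natCast, ENNReal.ofReal_natCast]

lemma hasDerivAt_log_one_add_div_one_sub {t : ℝ} (ht : |t| < 1) :
    HasDerivAt (fun t => Real.log ((1 + t) / (1 - t))) (2 / (1 - t ^ 2)) t := by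
  obtain ⟨h₁, h₂⟩ := abs_lt.1 ht
  have hadd : 1 + t ≠ 0 := by linarith
  have hsub : 1 - t ≠ 0 := by linarith
  have hsq : 1 - t ^ 2 = (1 + t) * (1 - t) := by ring
  refine ((((hasDerivAt_id' t).const_add 1).div ((hasDerivAt_id' t).const_sub 1) hsub).log
    (div_ne_zero hadd hsub)).congr_deriv ?_
  rw [Pi.div_apply, hsq]
  field_simp
  ring

lemma log_one_add_div_one_sub_nonneg {t : ℝ} (h₀ : 0 ≤ t) (h₁ : t < 1) :
    0 ≤ Real.log ((1 + t) / (1 - t)) :=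
  Real.log_nonneg ((one_le_div (by linarith)).2 (by linarith))

lemma one_sub_sq_pos {t : ℝ} (h₀ : 0 ≤ t) (h₁ : t < 1) : 0 < 1 - t ^ 2 :=
  sub_pos.2 (pow_lt_one₀ h₀ h₁ two_ne_zero)

lemma ofReal_two_div_one_sub_sq {t : ℝ} (h₀ : 0 ≤ t) (h₁ : t < 1) :
    ENNReal.ofReal (2 / (1 - t ^ 2)) = 2 / (1 - ENNReal.ofReal t ^ 2) := by
  rw [ENNReal.ofReal_div_of_pos (one_sub_sq_pos h₀ h₁), ENNReal.ofReal_sub _ (by positivity),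
    ENNReal.ofReal_pow h₀, ENNReal.ofReal_ofNat, ENNReal.ofReal_one]

/-- The generating series `∑ ∏ᵢ (2 / mᵢ) · x^{mₙ}` of depth `n`: the level-two multiple
polylogarithm `A(1, …, 1; x)` of Kaneko and Tsumura, taken in `ℝ≥0∞` so that its terms may be
integrated one by one without a convergence hypothesis. -/
noncomputable def TPolylogOnes (n : ℕ) (x : ℝ≥0∞) : ℝ≥0∞ :=
  ∑' f : TIndex n, (∏ i, 2 / (f.1 i : ℝ≥0∞)) * x ^ f.top

lemma TPolylogOnes_zero (x : ℝ≥0∞) : TPolylogOnes 0 x = 1 := by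
  have : Unique (TIndex 0) := ⟨⟨⟨Fin.elim0, fun i => i.elim0, fun i => i.elim0⟩⟩,
    fun f => Subtype.ext (Subsingleton.elim _ _)⟩
  simp [TPolylogOnes, TIndex.top, tsum_fintype]

lemma TPolylogOnes_succ (n : ℕ) {x : ℝ} (hx : 0 ≤ x) :
    TPolylogOnes (n + 1) (ENNReal.ofReal x)
      = ∫⁻ t in Set.Ioo 0 x,
          TPolylogOnes n (ENNReal.ofReal t) * (2 / (1 - ENNReal.ofReal t ^ 2)) := by
  have h := lintegral_tsum_mul_pow_top_mul_two_div (n := n) (μ := volume.restrict (Set.Ioo 0 x))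
    (fun f => ∏ i, 2 / (f.1 i : ℝ≥0∞)) ENNReal.measurable_ofReal (measurable_const (a := 1))
  simp only [mul_one] at h
  refine Eq.trans (tsum_congr fun g => ?_) h.symm
  rw [lintegral_Ioo_ofReal_pow_pred hx (g.apply_pos _), Fin.prod_univ_castSucc,
    TIndex.top_eq_apply_last]
  simp only [TIndex.init, Fin.init, div_eq_mul_inv]
  ring

lemma lintegral_Ioo_log_pow_mul_two_div (n : ℕ) {x : ℝ} (h₀ : 0 ≤ x) (h₁ : x < 1) :
    ∫⁻ t in Set.Ioo 0 x,
        ENNReal.ofReal (Real.log ((1 + t) / (1 - t)) ^ n / n.factorial * (2 / (1 - t ^ 2)))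
      = ENNReal.ofReal (Real.log ((1 + x) / (1 - x)) ^ (n + 1) / (n + 1).factorial) := by
  have hderiv (t : ℝ) (ht : t ∈ Set.Icc 0 x) :
      HasDerivAt (fun t => Real.log ((1 + t) / (1 - t)) ^ (n + 1) / (n + 1).factorial)
        (Real.log ((1 + t) / (1 - t)) ^ n / n.factorial * (2 / (1 - t ^ 2))) t := by
    have hlog := hasDerivAt_log_one_add_div_one_sub
      ((abs_of_nonneg ht.1).trans_lt (ht.2.trans_lt h₁))
    refine ((hlog.pow (n + 1)).div_const _).congr_deriv ?_
    rw [Nat.factorial_succ, Nat.cast_mul, Nat.add_sub_cancel]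
    field_simp
  rw [lintegral_Ioo_ofReal_deriv_of_nonneg h₀
    (fun t ht => (hderiv t ht).continuousAt.continuousWithinAt)
    (fun t ht => hderiv t (Set.Ioo_subset_Icc_self ht)) fun t ht => ?_]
  · simp
  · have hlog := log_one_add_div_one_sub_nonneg ht.1.le (ht.2.trans h₁)
    have hsq := one_sub_sq_pos ht.1.le (ht.2.trans h₁)
    positivity

theorem TPolylogOnes_ofReal (n : ℕ) {x : ℝ} (h₀ : 0 ≤ x) (h₁ : x < 1) :
    TPolylogOnes n (ENNReal.ofReal x)
      = ENNReal.ofReal (Real.log ((1 + x) / (1 - x)) ^ n / n.factorial) := by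
  induction n generalizing x with
  | zero => simp [TPolylogOnes_zero]
  | succ n ih =>
    rw [TPolylogOnes_succ n h₀, ← lintegral_Ioo_log_pow_mul_two_div n h₀ h₁]
    refine setLIntegral_congr_fun measurableSet_Ioo fun t ht => ?_
    have ht₁ : t < 1 := ht.2.trans h₁
    have hlog := log_one_add_div_one_sub_nonneg ht.1.le ht₁
    simp only [ih ht.1.le ht₁, ← ofReal_two_div_one_sub_sq ht.1.le ht₁]
    rw [ENNReal.ofReal_mul (by positivity)]

lemma MTV_ofFn {r : ℕ} (s : Fin r → ℕ) :
    MTV (List.ofFn s) = (∑' f : TIndex r, ∏ i, 2 / (f.1 i : ℝ≥0∞) ^ s i).toReal := by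
  have hlength {k : List ℕ} (hk : k.length = r) :
      MTV k = 2 ^ r * ∑' f : TIndex r, ∏ i, 1 / (f.1 i : ℝ) ^ k.get (i.cast hk.symm) := by
    subst hk
    rfl
  have hne (f : TIndex r) (i : Fin r) : 2 / (f.1 i : ℝ≥0∞) ^ s i ≠ ∞ :=
    ENNReal.div_ne_top (by simp) (pow_ne_zero _ (Nat.cast_ne_zero.2 (f.apply_pos i).ne'))
  rw [hlength (List.length_ofFn), ← tsum_mul_left,
    ENNReal.tsum_toReal_eq fun f => ENNReal.prod_ne_top fun i _ => hne f i]
  refine tsum_congr fun f => ?_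
  simp [ENNReal.toReal_prod, div_eq_mul_inv, Finset.prod_mul_distrib]

lemma MTV_replicate_one_append_s7 (n k : ℕ) :
    MTV (List.replicate n 1 ++ [k])
      = (∑' g : TIndex (n + 1),
          (∏ i, 2 / (g.init.1 i : ℝ≥0∞)) * (2 / (g.1 (Fin.last n) : ℝ≥0∞) ^ k)).toReal := by
  have hofFn : List.replicate n 1 ++ [k]
      = List.ofFn (Fin.snoc (fun _ => 1) k : Fin (n + 1) → ℕ) := by
    simp only [List.ofFn_succ', List.concat_eq_append, Fin.snoc_castSucc, Fin.snoc_last,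
      List.ofFn_const]
  rw [hofFn, MTV_ofFn]
  simp only [Fin.prod_univ_castSucc, Fin.snoc_castSucc, Fin.snoc_last, pow_one, TIndex.init,
    Fin.init]

lemma lintegral_TPolylogOnes_mul_log_pow (m n : ℕ) :
    ∫⁻ t in Set.Ioo (0 : ℝ) 1, TPolylogOnes n (ENNReal.ofReal t) * (2 / (1 - ENNReal.ofReal t ^ 2))
        * ENNReal.ofReal (Real.log (1 / t) ^ m)
      = m.factorial * ∑' g : TIndex (n + 1),
          (∏ i, 2 / (g.init.1 i : ℝ≥0∞)) * (2 / (g.1 (Fin.last n) : ℝ≥0∞) ^ (m + 1)) := by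
  refine (lintegral_tsum_mul_pow_top_mul_two_div _ ENNReal.measurable_ofReal
    (by fun_prop)).trans ?_
  rw [← ENNReal.tsum_mul_left]
  refine tsum_congr fun g => ?_
  rw [lintegral_Ioo_pow_pred_mul_log_pow m (g.apply_pos _)]
  simp only [div_eq_mul_inv]
  ring

lemma ofReal_log_pow_mul_log_pow_mul_two_div (m n : ℕ) {t : ℝ} (ht : t ∈ Set.Ioo 0 1) :
    ENNReal.ofReal (Real.log ((1 + t) / (1 - t)) ^ n * Real.log (1 / t) ^ m * (2 / (1 - t ^ 2)))
      = n.factorial * (TPolylogOnes n (ENNReal.ofReal t) * (2 / (1 - ENNReal.ofReal t ^ 2))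
          * ENNReal.ofReal (Real.log (1 / t) ^ m)) := by
  have hlog := log_one_add_div_one_sub_nonneg ht.1.le ht.2
  have hsq := one_sub_sq_pos ht.1.le ht.2
  rw [TPolylogOnes_ofReal n ht.1.le ht.2, ← ofReal_two_div_one_sub_sq ht.1.le ht.2,
    ← ENNReal.ofReal_natCast, ← ENNReal.ofReal_mul (by positivity),
    ← ENNReal.ofReal_mul (by positivity), ← ENNReal.ofReal_mul (by positivity)]
  congr 1
  field_simp

lemma integral_log_pow_mul_log_pow_mul_two_div (m n : ℕ) :
    ∫ t in Set.Ioo (0 : ℝ) 1,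
        Real.log ((1 + t) / (1 - t)) ^ n * Real.log (1 / t) ^ m * (2 / (1 - t ^ 2))
      = n.factorial * (∫⁻ t in Set.Ioo (0 : ℝ) 1,
          TPolylogOnes n (ENNReal.ofReal t) * (2 / (1 - ENNReal.ofReal t ^ 2))
            * ENNReal.ofReal (Real.log (1 / t) ^ m)).toReal := by
  have hnonneg (t : ℝ) (ht : t ∈ Set.Ioo 0 1) :
      0 ≤ Real.log ((1 + t) / (1 - t)) ^ n * Real.log (1 / t) ^ m * (2 / (1 - t ^ 2)) := by
    have h₁ := log_one_add_div_one_sub_nonneg ht.1.le ht.2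
    have h₂ := Real.log_nonneg ((one_le_div ht.1).2 ht.2.le)
    have h₃ := one_sub_sq_pos ht.1.le ht.2
    positivity
  rw [integral_eq_lintegral_of_nonneg_ae (ae_restrict_of_forall_mem measurableSet_Ioo hnonneg)
      (by fun_prop),
    setLIntegral_congr_fun measurableSet_Ioo
      fun t ht => ofReal_log_pow_mul_log_pow_mul_two_div m n ht,
    lintegral_const_mul' _ _ (ENNReal.natCast_ne_top _), ENNReal.toReal_mul,
    ENNReal.toReal_natCast]

/-- **Theorem (single-integral expression for height-one multiple T-values).**
For `m, n ≥ 1`,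
`T(1^{n−1}, m+1)
  = 1/((n−1)!·m!) ∫₀¹ (log((1+t)/(1−t)))^{n−1} (log(1/t))^m · 2/(1−t²) dt`. -/
theorem MTV_height_one_integral (m n : ℕ) (hm : 1 ≤ m) (hn : 1 ≤ n) :
    MTV (List.replicate (n - 1) 1 ++ [m + 1])
      = 1 / ((n - 1).factorial * m.factorial : ℝ)
        * ∫ t in Set.Ioo (0 : ℝ) 1,
            (Real.log ((1 + t) / (1 - t))) ^ (n - 1) * (Real.log (1 / t)) ^ m
              * (2 / (1 - t ^ 2)) := by
  rw [integral_log_pow_mul_log_pow_mul_two_div, lintegral_TPolylogOnes_mul_log_pow,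
    ENNReal.toReal_mul, ENNReal.toReal_natCast, ← MTV_replicate_one_append_s7]
  field_simp
end

section
/- For every positive integer q, the symmetric limit lim_{L→∞} ∑_{l=−L}^{L} ∑_{m,n=0}^{∞} 1/((2l+1)(2m+1)(2n+1)^q (2l+2m+2n+3)) equals 0, where for each fixed l the double sum over m, n ≥ 0 converges. -/
open Filter

/-! With `N = m + n + 1`, the last factor of the denominator is `2l + 1 + 2N`, so by partial
fractions the sum over `l` alone, for fixed `m` and `n`, telescopes to `0`. Summing over `l` first
is legitimate because the triple series converges absolutely: if `x, y > 0` and `x + y ≥ 2M > 0`,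
then `(xy)⁻¹ ≤ M ^ (-θ) * (x ^ (θ - 2) + y ^ (θ - 2))` for `0 ≤ θ ≤ 1`. For `θ < 1` this is
summable over `l`, and the factor `N ^ (-θ)` it leaves can be split between `m` and `n`. -/

section Telescoping

variable {E : Type*} [AddCommGroup E] [TopologicalSpace E] [IsTopologicalAddGroup E] [T2Space E]
  {u : ℤ → E} {a b : E}

lemma hasSum_int_sub_succ (ha : Tendsto u atBot (nhds a)) (hb : Tendsto u atTop (nhds b))
    (hs : Summable fun l : ℤ => u l - u (l + 1)) :
    HasSum (fun l : ℤ => u l - u (l + 1)) (a - b) := by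
  have hlim : Tendsto (fun L : ℕ => u (-(L : ℤ)) - u L) atTop (nhds (a - b)) :=
    (ha.comp (tendsto_neg_atTop_atBot.comp tendsto_natCast_atTop_atTop)).sub
      (hb.comp tendsto_natCast_atTop_atTop)
  have hpartial := hs.hasSum.comp (Finset.tendsto_Ico_neg (R := ℤ))
  simp only [Function.comp_def, Finset.sum_Ico_int_sub] at hpartial
  exact tendsto_nhds_unique hpartial hlim ▸ hs.hasSum

lemma hasSum_int_sub_add_nat (ha : Tendsto u atBot (nhds a)) (hb : Tendsto u atTop (nhds b))
    (N : ℕ) (hs : Summable fun l : ℤ => u l - u (l + N)) :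
    HasSum (fun l : ℤ => u l - u (l + N)) (N • (a - b)) := by
  -- `u l - u (l + N)` is the one-step difference of the window sums `U l`.
  let U : ℤ → E := fun l => ∑ j ∈ Finset.range N, u (l + j)
  have hU : ∀ l, U l - U (l + 1) = u l - u (l + N) := fun l => by
    have hshift : U (l + 1) = ∑ j ∈ Finset.range N, u (l + (j + 1 : ℕ)) :=
      Finset.sum_congr rfl fun j _ => by congr 1; push_cast; ring
    rw [hshift, ← Finset.sum_sub_distrib, Finset.sum_range_sub', Nat.cast_zero, add_zero]
  have hUa : Tendsto U atBot (nhds (N • a)) := by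
    simpa using tendsto_finsetSum (Finset.range N) fun j _ =>
      ha.comp (tendsto_atBot_add_const_right atBot (j : ℤ) tendsto_id)
  have hUb : Tendsto U atTop (nhds (N • b)) := by
    simpa using tendsto_finsetSum (Finset.range N) fun j _ =>
      hb.comp (tendsto_atTop_add_const_right atTop (j : ℤ) tendsto_id)
  simp only [← hU, nsmul_sub] at hs ⊢
  exact hasSum_int_sub_succ hUa hUb hs

end Telescoping

lemma hasSum_tsum_of_forall_hasSum_swap {E β γ : Type*} [AddCommGroup E] [UniformSpace E]
    [IsUniformAddGroup E] [CompleteSpace E] [T2Space E] {F : β × γ → E} {g : γ → E} {s : E}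
    (hF : Summable F) (hcol : ∀ c, HasSum (fun b => F (b, c)) (g c)) (hg : HasSum g s) :
    HasSum (fun b => ∑' c, F (b, c)) s := by
  have htotal : ∑' p, F p = s := by
    rw [← (Equiv.prodComm γ β).tsum_eq]
    exact (hF.prod_symm.hasSum.prod_fiberwise hcol).unique hg
  exact htotal ▸ hF.hasSum.prod_fiberwise fun b => (hF.prod_factor b).hasSum

section InverseProduct

variable {x y M θ : ℝ}

lemma inv_mul_le_rpow_mul_rpow_of_le (hx : 0 < x) (hM : 0 < M) (hxy : x ≤ y)
    (hsum : 2 * M ≤ x + y) (hθ₀ : 0 ≤ θ) (hθ₁ : θ ≤ 1) :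
    (x * y)⁻¹ ≤ M ^ (-θ) * x ^ (θ - 2) := by
  have hy : 0 < y := hx.trans_le hxy
  have hyM : y ^ (-θ) ≤ M ^ (-θ) :=
    Real.rpow_le_rpow_of_nonpos hM (by linarith) (by linarith)
  have hyx : y ^ (θ - 1) ≤ x ^ (θ - 1) :=
    Real.rpow_le_rpow_of_nonpos hx hxy (by linarith)
  calc (x * y)⁻¹ = x ^ (-1 : ℝ) * (y ^ (-θ) * y ^ (θ - 1)) := by
        rw [← Real.rpow_add hy, mul_inv, Real.rpow_neg_one, ← Real.rpow_neg_one y]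
        ring_nf
    _ ≤ x ^ (-1 : ℝ) * (M ^ (-θ) * x ^ (θ - 1)) := by gcongr
    _ = M ^ (-θ) * (x ^ (-1 : ℝ) * x ^ (θ - 1)) := by ring
    _ = M ^ (-θ) * x ^ (θ - 2) := by rw [← Real.rpow_add hx]; ring_nf

lemma inv_mul_le_rpow_mul_add_rpow (hx : 0 < x) (hy : 0 < y) (hM : 0 < M)
    (hsum : 2 * M ≤ x + y) (hθ₀ : 0 ≤ θ) (hθ₁ : θ ≤ 1) :
    (x * y)⁻¹ ≤ M ^ (-θ) * (x ^ (θ - 2) + y ^ (θ - 2)) := by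
  rcases le_total x y with hxy | hyx
  · refine (inv_mul_le_rpow_mul_rpow_of_le hx hM hxy hsum hθ₀ hθ₁).trans ?_
    gcongr
    exact le_add_of_nonneg_right (by positivity)
  · rw [mul_comm x y]
    refine (inv_mul_le_rpow_mul_rpow_of_le hy hM hyx (by linarith) hθ₀ hθ₁).trans ?_
    gcongr
    exact le_add_of_nonneg_left (by positivity)

end InverseProduct

section ShiftedIntegers

variable {ι : Type*} {a θ : ℝ} {w : ι → ℝ} {N : ι → ℕ}

lemma abs_inv_int_add_mul_le (ha : ∀ l : ℤ, (l : ℝ) + a ≠ 0) {k : ℕ} (hk : k ≠ 0)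
    (hθ₀ : 0 ≤ θ) (hθ₁ : θ ≤ 1) (l : ℤ) :
    |((l + a) * (l + k + a))⁻¹| ≤
      (k / 2 : ℝ) ^ (-θ) * (|l + a| ^ (θ - 2) + |l + k + a| ^ (θ - 2)) := by
  have hx : 0 < |l + a| := abs_pos.2 (ha l)
  have hy : 0 < |l + k + a| := abs_pos.2 (mod_cast ha (l + k))
  have hsum : 2 * (k / 2 : ℝ) ≤ |l + a| + |l + k + a| := by
    linarith [neg_abs_le (l + a), le_abs_self (l + k + a)]
  rw [abs_inv, abs_mul]
  exact inv_mul_le_rpow_mul_add_rpow hx hy (by positivity) hsum hθ₀ hθ₁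

lemma summable_abs_int_add_rpow (a : ℝ) {p : ℝ} (hp : p < -1) :
    Summable fun l : ℤ => |l + a| ^ p := by
  refine ((Real.summable_one_div_int_add_rpow a (-p)).2 (by linarith)).congr fun l => ?_
  rw [Real.rpow_neg (abs_nonneg _), one_div, inv_inv]

lemma summable_div_int_add_mul (ha : ∀ l : ℤ, (l : ℝ) + a ≠ 0) (hN : ∀ i, N i ≠ 0)
    (hθ₀ : 0 ≤ θ) (hθ₁ : θ < 1) (hw : Summable fun i => |w i| * (N i : ℝ) ^ (-θ)) :
    Summable fun p : ℤ × ι => w p.2 / ((p.1 + a) * (p.1 + N p.2 + a)) := by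
  have hnear : Summable fun p : ℤ × ι => |p.1 + a| ^ (θ - 2) * (|w p.2| * (N p.2 : ℝ) ^ (-θ)) :=
    (summable_abs_int_add_rpow a (by linarith)).mul_of_nonneg hw
      (fun _ => by positivity) (fun _ => by positivity)
  have hshear : Function.Injective fun p : ℤ × ι => (p.1 + (N p.2 : ℤ), p.2) := by
    rintro ⟨l₁, i₁⟩ ⟨l₂, i₂⟩ h
    obtain ⟨hl, rfl⟩ := Prod.mk.inj h
    exact Prod.ext (add_right_cancel hl) rfl
  refine ((hnear.add (hnear.comp_injective hshear)).mul_left (2 ^ θ)).of_norm_bounded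
    fun ⟨l, i⟩ => ?_
  have hhalf : (N i / 2 : ℝ) ^ (-θ) = 2 ^ θ * (N i : ℝ) ^ (-θ) := by
    rw [Real.div_rpow (by positivity) (by positivity), Real.rpow_neg zero_le_two, div_inv_eq_mul,
      mul_comm]
  calc ‖w i / ((l + a) * (l + N i + a))‖ = |w i| * |((l + a) * (l + N i + a))⁻¹| := by
        rw [Real.norm_eq_abs, div_eq_mul_inv, abs_mul]
    _ ≤ |w i| * ((N i / 2 : ℝ) ^ (-θ) * (|l + a| ^ (θ - 2) + |l + N i + a| ^ (θ - 2))) := by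
        gcongr
        exact abs_inv_int_add_mul_le ha (hN i) hθ₀ hθ₁.le l
    _ = _ := by
        simp only [hhalf, Function.comp_apply, Int.cast_add, Int.cast_natCast]
        ring

lemma hasSum_one_div_int_add_mul (ha : ∀ l : ℤ, (l : ℝ) + a ≠ 0) {k : ℕ} (hk : k ≠ 0) :
    HasSum (fun l : ℤ => 1 / ((l + a) * (l + k + a))) 0 := by
  have hsummable : Summable fun l : ℤ => 1 / ((l + a) * (l + k + a)) :=
    (summable_div_int_add_mul (ι := Unit) (w := 1) (N := fun _ => k) ha (fun _ => hk) le_rfl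
      one_pos .of_finite).prod_symm.prod_factor ()
  have hpartialFractions : ∀ l : ℤ, ((l : ℝ) + a)⁻¹ - (((l + k : ℤ) : ℝ) + a)⁻¹ =
      k * (1 / ((l + a) * (l + k + a))) := fun l => by
    have hl := ha l
    have hlk : (l : ℝ) + k + a ≠ 0 := mod_cast ha (l + k)
    push_cast
    field_simp
    ring
  have hbot : Tendsto (fun l : ℤ => ((l : ℝ) + a)⁻¹) atBot (nhds 0) :=
    (tendsto_atBot_add_const_right _ a (tendsto_intCast_atBot_iff.2 tendsto_id)).inv_tendsto_atBot
  have htop : Tendsto (fun l : ℤ => ((l : ℝ) + a)⁻¹) atTop (nhds 0) :=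
    (tendsto_atTop_add_const_right _ a tendsto_intCast_atTop_atTop).inv_tendsto_atTop
  have htelescope := hasSum_int_sub_add_nat hbot htop k
    ((hsummable.mul_left (k : ℝ)).congr fun l => (hpartialFractions l).symm)
  simp only [hpartialFractions, sub_self, smul_zero] at htelescope
  rwa [← mul_zero (k : ℝ), hasSum_mul_left_iff (Nat.cast_ne_zero.2 hk)] at htelescope

lemma hasSum_tsum_div_int_add_mul (ha : ∀ l : ℤ, (l : ℝ) + a ≠ 0) (hN : ∀ i, N i ≠ 0)
    (hθ₀ : 0 ≤ θ) (hθ₁ : θ < 1) (hw : Summable fun i => |w i| * (N i : ℝ) ^ (-θ)) :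
    HasSum (fun l : ℤ => ∑' i, w i / ((l + a) * (l + N i + a))) 0 := by
  refine hasSum_tsum_of_forall_hasSum_swap (summable_div_int_add_mul ha hN hθ₀ hθ₁ hw)
    (fun i => ?_) hasSum_zero
  simpa only [mul_one_div, mul_zero] using (hasSum_one_div_int_add_mul ha (hN i)).mul_left (w i)

end ShiftedIntegers

lemma summable_nat_add_one_rpow {p : ℝ} (hp : p < -1) :
    Summable fun n : ℕ => ((n : ℝ) + 1) ^ p := by
  refine ((Real.summable_one_div_nat_add_rpow 1 (-p)).2 (by linarith)).congr fun n => ?_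
  rw [abs_of_pos (by positivity), Real.rpow_neg (by positivity), one_div, inv_inv]

lemma summable_rpow_mul_rpow_mul_add_rpow {r s α β : ℝ} (hα : 0 ≤ α) (hβ : 0 ≤ β)
    (hr : 1 < r + α) (hs : 1 < s + β) :
    Summable fun p : ℕ × ℕ => ((p.1 : ℝ) + 1) ^ (-r) * ((p.2 : ℝ) + 1) ^ (-s) *
      ((p.1 : ℝ) + p.2 + 1) ^ (-(α + β)) := by
  refine .of_nonneg_of_le (fun _ => by positivity) (fun ⟨m, n⟩ => ?_)
    ((summable_nat_add_one_rpow (p := -r + -α) (by linarith)).mul_of_nonneg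
      (summable_nat_add_one_rpow (p := -s + -β) (by linarith))
      (fun _ => by positivity) (fun _ => by positivity))
  have hm : (0 : ℝ) < m + 1 := by positivity
  have hn : (0 : ℝ) < n + 1 := by positivity
  have hmα : ((m : ℝ) + n + 1) ^ (-α) ≤ ((m : ℝ) + 1) ^ (-α) :=
    Real.rpow_le_rpow_of_nonpos hm (by linarith) (by linarith)
  have hnβ : ((m : ℝ) + n + 1) ^ (-β) ≤ ((n : ℝ) + 1) ^ (-β) :=
    Real.rpow_le_rpow_of_nonpos hn (by linarith) (by linarith)
  calc ((m : ℝ) + 1) ^ (-r) * ((n : ℝ) + 1) ^ (-s) * ((m : ℝ) + n + 1) ^ (-(α + β))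
      = ((m : ℝ) + 1) ^ (-r) * ((n : ℝ) + 1) ^ (-s) *
          (((m : ℝ) + n + 1) ^ (-α) * ((m : ℝ) + n + 1) ^ (-β)) := by
        rw [← Real.rpow_add (by positivity), neg_add]
    _ ≤ ((m : ℝ) + 1) ^ (-r) * ((n : ℝ) + 1) ^ (-s) *
          (((m : ℝ) + 1) ^ (-α) * ((n : ℝ) + 1) ^ (-β)) := by gcongr
    _ = ((m : ℝ) + 1) ^ (-r + -α) * ((n : ℝ) + 1) ^ (-s + -β) := by
        rw [Real.rpow_add hm, Real.rpow_add hn]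
        ring

-- The `4` comes from `(2l + 1)(2l + 1 + 2N) = 4 (l + 1/2)(l + 1/2 + N)`.
lemma exists_summable_odd_weight_mul_rpow {r s : ℝ} (hr : 0 < r) (hs : 0 < s) (hrs : 1 < r + s) :
    ∃ θ : ℝ, 0 ≤ θ ∧ θ < 1 ∧ Summable fun p : ℕ × ℕ =>
      |1 / (4 * ((2 * (p.1 : ℝ) + 1) ^ r * (2 * (p.2 : ℝ) + 1) ^ s))| *
        ((p.1 + p.2 + 1 : ℕ) : ℝ) ^ (-θ) := by
  obtain ⟨α, β, hα, hβ, hαβ, hrα, hsβ⟩ :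
      ∃ α β : ℝ, 0 ≤ α ∧ 0 ≤ β ∧ α + β < 1 ∧ 1 < r + α ∧ 1 < s + β := by
    have hmin : 1 < min r 1 + min s 1 := by
      rcases min_cases r 1 with hr₀ | hr₀ <;> rcases min_cases s 1 with hs₀ | hs₀ <;> linarith
    have hr₁ := min_le_right r 1
    have hs₁ := min_le_right s 1
    have hr₂ := min_le_left r 1
    have hs₂ := min_le_left s 1
    -- `1 - min r 1` and `1 - min s 1` are the infima of the possible `α` and `β`; each is raised
    -- by a third of the slack in `α + β < 1`.
    exact ⟨1 - min r 1 + (min r 1 + min s 1 - 1) / 3, 1 - min s 1 + (min r 1 + min s 1 - 1) / 3,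
      by linarith, by linarith, by linarith, by linarith, by linarith⟩
  refine ⟨α + β, by linarith, hαβ, .of_nonneg_of_le (fun _ => by positivity) (fun ⟨m, n⟩ => ?_)
    (summable_rpow_mul_rpow_mul_add_rpow hα hβ hrα hsβ)⟩
  have hweight : |1 / (4 * ((2 * (m : ℝ) + 1) ^ r * (2 * (n : ℝ) + 1) ^ s))| ≤
      ((m : ℝ) + 1) ^ (-r) * ((n : ℝ) + 1) ^ (-s) := by
    rw [abs_of_pos (by positivity), Real.rpow_neg (by positivity), Real.rpow_neg (by positivity),
      ← mul_inv, one_div]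
    refine inv_anti₀ (by positivity) (le_trans ?_ (le_mul_of_one_le_left (by positivity) (by simp)))
    gcongr <;> linarith
  push_cast
  gcongr

theorem symmetric_sum_vanishes_general {r s : ℝ} (hr : 0 < r) (hs : 0 < s) (hrs : 1 < r + s) :
    (∀ l : ℤ, Summable fun mn : ℕ × ℕ =>
      1 / ((2 * (l : ℝ) + 1) * (2 * (mn.1 : ℝ) + 1) ^ r * (2 * (mn.2 : ℝ) + 1) ^ s
        * (2 * (l : ℝ) + 2 * (mn.1 : ℝ) + 2 * (mn.2 : ℝ) + 3))) ∧
    HasSum (fun l : ℤ => ∑' mn : ℕ × ℕ,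
      1 / ((2 * (l : ℝ) + 1) * (2 * (mn.1 : ℝ) + 1) ^ r * (2 * (mn.2 : ℝ) + 1) ^ s
        * (2 * (l : ℝ) + 2 * (mn.1 : ℝ) + 2 * (mn.2 : ℝ) + 3))) 0 := by
  obtain ⟨θ, hθ₀, hθ₁, hw⟩ := exists_summable_odd_weight_mul_rpow hr hs hrs
  have hhalf : ∀ l : ℤ, (l : ℝ) + 1 / 2 ≠ 0 := fun l h => by
    have : 2 * l + 1 = 0 := by exact_mod_cast (by linarith : 2 * (l : ℝ) + 1 = 0)
    omega
  have hterm : ∀ (l : ℤ) (mn : ℕ × ℕ),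
      1 / ((2 * (l : ℝ) + 1) * (2 * (mn.1 : ℝ) + 1) ^ r * (2 * (mn.2 : ℝ) + 1) ^ s
        * (2 * (l : ℝ) + 2 * (mn.1 : ℝ) + 2 * (mn.2 : ℝ) + 3)) =
      1 / (4 * ((2 * (mn.1 : ℝ) + 1) ^ r * (2 * (mn.2 : ℝ) + 1) ^ s)) /
        ((l + 1 / 2) * (l + (mn.1 + mn.2 + 1 : ℕ) + 1 / 2)) := fun l mn => by
    rw [div_div]
    push_cast
    ring
  simp only [hterm]
  have hN : ∀ mn : ℕ × ℕ, mn.1 + mn.2 + 1 ≠ 0 := fun _ => Nat.succ_ne_zero _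
  exact ⟨(summable_div_int_add_mul hhalf hN hθ₀ hθ₁ hw).prod_factor,
    hasSum_tsum_div_int_add_mul hhalf hN hθ₀ hθ₁ hw⟩

/-- **Lemma.** For every positive integer `q`, for each fixed `l ∈ ℤ` the double sum
`∑_{m,n≥0} 1/((2l+1)(2m+1)(2n+1)^q (2l+2m+2n+3))` converges, and the symmetric limit
`lim_{L→∞} ∑_{l=−L}^{L} ∑_{m,n≥0} 1/((2l+1)(2m+1)(2n+1)^q (2l+2m+2n+3))` equals `0`. -/
theorem symmetric_sum_vanishes (q : ℕ) (hq : 1 ≤ q) :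
    (∀ l : ℤ, Summable (fun mn : ℕ × ℕ =>
      1 / ((2 * (l : ℝ) + 1) * (2 * (mn.1 : ℝ) + 1) * (2 * (mn.2 : ℝ) + 1) ^ q
        * (2 * (l : ℝ) + 2 * (mn.1 : ℝ) + 2 * (mn.2 : ℝ) + 3)))) ∧
    Tendsto (fun L : ℕ =>
        ∑ l ∈ Finset.Icc (-(L : ℤ)) (L : ℤ),
          ∑' mn : ℕ × ℕ,
            1 / ((2 * (l : ℝ) + 1) * (2 * (mn.1 : ℝ) + 1) * (2 * (mn.2 : ℝ) + 1) ^ q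
              * (2 * (l : ℝ) + 2 * (mn.1 : ℝ) + 2 * (mn.2 : ℝ) + 3)))
      atTop (nhds 0) := by
  have hq₀ : (0 : ℝ) < q := mod_cast hq
  have h := symmetric_sum_vanishes_general one_pos hq₀ (lt_add_of_pos_right 1 hq₀)
  simp only [Real.rpow_one, Real.rpow_natCast] at h
  exact ⟨h.1, h.2.comp Finset.tendsto_Icc_neg⟩
end

section
/- Partial fraction identity in three variables: for every positive integer q and all real (or complex) numbers x, y, z such that x, y, z, x+z, y+z, x+y and x+y+z are all nonzero, 1/(x y z^q) = ∑_{j=0}^{q−1} [ ∑_{ν=0}^{q−j−1} 1/(z^{q−j−ν} (x+z)^{ν+1} (x+y+z)^{j+1}) + 1/(x (x+z)^{q−j} (x+y+z)^{j+1}) + ∑_{ν=0}^{q−j−1} 1/(z^{q−j−ν} (y+z)^{ν+1} (x+y+z)^{j+1}) + 1/(y (y+z)^{q−j} (x+y+z)^{j+1}) ] + 1/(x (x+y) (x+y+z)^q) + 1/(y (x+y) (x+y+z)^q). -/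
/-!
Expanding `1 / (s * z ^ n)` in powers of `z` and `s + z` is a geometric sum in `z⁻¹` and
`(s + z)⁻¹`. After dividing by `x`, each term contains a factor `1 / (x * z ^ m)`, which expands in
the same way. The identity is the sum of two such double expansions with `s = x + y`, because
`1 / (x * y) = 1 / (x * (x + y)) + 1 / (y * (x + y))`.
-/

section Field

variable {K : Type*} [Field K] {x y z s : K}

theorem one_div_mul_pow_eq_sum (hx : x ≠ 0) (hz : z ≠ 0) (hxz : x + z ≠ 0) (n : ℕ) :
    1 / (x * z ^ n)
      = (∑ ν ∈ Finset.range n, 1 / (z ^ (n - ν) * (x + z) ^ (ν + 1)))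
        + 1 / (x * (x + z) ^ n) := by
  have inv_sub_inv_eq : z⁻¹ - (x + z)⁻¹ = x * (z⁻¹ * (x + z)⁻¹) := by
    rw [inv_sub_inv hz hxz, add_sub_cancel_right, div_eq_mul_inv, mul_inv]
  have geom_term : ∀ ν ∈ Finset.range n,
      1 / (z ^ (n - ν) * (x + z) ^ (ν + 1))
        = z⁻¹ * (x + z)⁻¹ * ((x + z)⁻¹ ^ ν * z⁻¹ ^ (n - 1 - ν)) := by
    intro ν hν
    have exponent_eq : n - ν = n - 1 - ν + 1 := by grind
    rw [exponent_eq, one_div, mul_inv, ← inv_pow, ← inv_pow]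
    ring
  have scaled_sum : x * ∑ ν ∈ Finset.range n, 1 / (z ^ (n - ν) * (x + z) ^ (ν + 1))
      = z⁻¹ ^ n - (x + z)⁻¹ ^ n := by
    calc x * ∑ ν ∈ Finset.range n, 1 / (z ^ (n - ν) * (x + z) ^ (ν + 1))
        = (z⁻¹ - (x + z)⁻¹)
            * ∑ ν ∈ Finset.range n, (x + z)⁻¹ ^ ν * z⁻¹ ^ (n - 1 - ν) := by
          rw [Finset.sum_congr rfl geom_term, ← Finset.mul_sum, ← mul_assoc, ← inv_sub_inv_eq]
      _ = z⁻¹ ^ n - (x + z)⁻¹ ^ n := by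
          linear_combination -geom_sum₂_mul (x + z)⁻¹ z⁻¹ n
  rw [← sub_eq_iff_eq_add, ← mul_right_inj' hx, scaled_sum]
  simp only [one_div, mul_inv, inv_pow, mul_sub, mul_inv_cancel_left₀ hx]

theorem one_div_mul_mul_pow_eq_sum_sum (hx : x ≠ 0) (hs : s ≠ 0) (hz : z ≠ 0)
    (hxz : x + z ≠ 0) (hsz : s + z ≠ 0) (n : ℕ) :
    1 / (x * s * z ^ n)
      = (∑ j ∈ Finset.range n,
          ((∑ ν ∈ Finset.range (n - j),
              1 / (z ^ (n - j - ν) * (x + z) ^ (ν + 1) * (s + z) ^ (j + 1)))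
            + 1 / (x * (x + z) ^ (n - j) * (s + z) ^ (j + 1))))
        + 1 / (x * s * (s + z) ^ n) := by
  have inner_expansion (j : ℕ) :
      1 / x * (1 / (z ^ (n - j) * (s + z) ^ (j + 1)))
        = (∑ ν ∈ Finset.range (n - j),
            1 / (z ^ (n - j - ν) * (x + z) ^ (ν + 1) * (s + z) ^ (j + 1)))
          + 1 / (x * (x + z) ^ (n - j) * (s + z) ^ (j + 1)) := by
    calc 1 / x * (1 / (z ^ (n - j) * (s + z) ^ (j + 1)))
        = 1 / (x * z ^ (n - j)) / (s + z) ^ (j + 1) := by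
          rw [one_div_mul_one_div, ← mul_assoc, div_div]
      _ = _ := by
          simp only [one_div_mul_pow_eq_sum hx hz hxz, add_div, Finset.sum_div, div_div]
  calc 1 / (x * s * z ^ n) = 1 / x * (1 / (s * z ^ n)) := by
        rw [one_div_mul_one_div, mul_assoc]
    _ = (∑ j ∈ Finset.range n, 1 / x * (1 / (z ^ (n - j) * (s + z) ^ (j + 1))))
          + 1 / (x * s * (s + z) ^ n) := by
        rw [one_div_mul_pow_eq_sum hs hz hsz, mul_add, Finset.mul_sum, one_div_mul_one_div x,
          ← mul_assoc]
    _ = _ := by simp only [inner_expansion]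

theorem one_div_mul_eq_add (hx : x ≠ 0) (hy : y ≠ 0) (hxy : x + y ≠ 0) :
    1 / (x * y) = 1 / (x * (x + y)) + 1 / (y * (x + y)) := by
  field_simp
  ring

theorem partial_fraction_three_general (q : ℕ)
    (hx : x ≠ 0) (hy : y ≠ 0) (hz : z ≠ 0) (hxz : x + z ≠ 0) (hyz : y + z ≠ 0)
    (hxy : x + y ≠ 0) (hxyz : x + y + z ≠ 0) :
    1 / (x * y * z ^ q)
      = (∑ j ∈ Finset.range q,
          ((∑ ν ∈ Finset.range (q - j),
              1 / (z ^ (q - j - ν) * (x + z) ^ (ν + 1) * (x + y + z) ^ (j + 1)))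
            + 1 / (x * (x + z) ^ (q - j) * (x + y + z) ^ (j + 1))
            + (∑ ν ∈ Finset.range (q - j),
                1 / (z ^ (q - j - ν) * (y + z) ^ (ν + 1) * (x + y + z) ^ (j + 1)))
            + 1 / (y * (y + z) ^ (q - j) * (x + y + z) ^ (j + 1))))
        + 1 / (x * (x + y) * (x + y + z) ^ q)
        + 1 / (y * (x + y) * (x + y + z) ^ q) := by
  have split_sum : 1 / (x * y * z ^ q)
      = 1 / (x * (x + y) * z ^ q) + 1 / (y * (x + y) * z ^ q) := by
    simp only [← div_div _ _ (z ^ q), one_div_mul_eq_add hx hy hxy, add_div]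
  rw [split_sum, one_div_mul_mul_pow_eq_sum_sum hx hxy hz hxz hxyz,
    one_div_mul_mul_pow_eq_sum_sum hy hxy hz hyz hxyz]
  simp only [Finset.sum_add_distrib]
  abel

end Field

/-- **Lemma (partial fractions in three variables).** For `q ≥ 1` and real `x, y, z`
with `x, y, z, x+z, y+z, x+y, x+y+z` all nonzero:
`1/(x y z^q) = ∑_{j=0}^{q−1} [ ∑_{ν=0}^{q−j−1} 1/(z^{q−j−ν} (x+z)^{ν+1} (x+y+z)^{j+1})
  + 1/(x (x+z)^{q−j} (x+y+z)^{j+1})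
  + ∑_{ν=0}^{q−j−1} 1/(z^{q−j−ν} (y+z)^{ν+1} (x+y+z)^{j+1})
  + 1/(y (y+z)^{q−j} (x+y+z)^{j+1}) ]
  + 1/(x (x+y) (x+y+z)^q) + 1/(y (x+y) (x+y+z)^q)`. -/
theorem partial_fraction_three (q : ℕ) (hq : 1 ≤ q) (x y z : ℝ)
    (hx : x ≠ 0) (hy : y ≠ 0) (hz : z ≠ 0) (hxz : x + z ≠ 0) (hyz : y + z ≠ 0)
    (hxy : x + y ≠ 0) (hxyz : x + y + z ≠ 0) :
    1 / (x * y * z ^ q)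
      = (∑ j ∈ Finset.range q,
          ((∑ ν ∈ Finset.range (q - j),
              1 / (z ^ (q - j - ν) * (x + z) ^ (ν + 1) * (x + y + z) ^ (j + 1)))
            + 1 / (x * (x + z) ^ (q - j) * (x + y + z) ^ (j + 1))
            + (∑ ν ∈ Finset.range (q - j),
                1 / (z ^ (q - j - ν) * (y + z) ^ (ν + 1) * (x + y + z) ^ (j + 1)))
            + 1 / (y * (y + z) ^ (q - j) * (x + y + z) ^ (j + 1))))
        + 1 / (x * (x + y) * (x + y + z) ^ q)
        + 1 / (y * (x + y) * (x + y + z) ^ q) :=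
  partial_fraction_three_general q hx hy hz hxz hyz hxy hxyz
end

section
/- For every integer k ≥ 3, ∑_{j=2}^{k−1} T(k−j, j) + T(1, k−1) = (k−1) T(k) − (1/2) ∑_{j=2}^{k−2} T(j) T(k−j). -/
/-!
Put `F(a, b) = 1 / (aⁿ b (a + b))` with `n = k - 2`. Partial fractions, that is finite geometric
sums, show that the left-hand side is `4 ∑ F(a, b)` over positive odd `a, b`, and that
`∑ T(j) T(k - j)` is `8 ∑ F(a, -b)` plus the contribution `2 (k - 3) T(k)` of the diagonal `a = b`,
where `F(a, -a) = 1 / 0 = 0`. For fixed `a`, summing `F(a, b) + F(a, -b)` over `b` amounts to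
summing `1 / (b - a) - 1 / (b + a)`, which telescopes to `0` by symmetry; only the correction at
`b = a` survives, whence `∑ (F(a, b) + F(a, -b)) = ∑ 1 / a ^ k = T(k) / 2`. Rearranging the double
series is legitimate because `∑ 1 / |a b (a + b)|` converges over all integers `a, b` with
`a b (a + b) ≠ 0`.
-/

open Filter Finset Topology

section PartialFractions

variable {K : Type*} [Field K]

/-- The summand of the Tornheim double series with exponents `(n, 1, 1)`. Negative `b` is allowed,
so that one function carries both signs in the partial fraction expansions; the value at `b = -a`
is `0`. -/
def tornheimTerm (n : ℕ) (a b : K) : K := (a ^ n * b * (a + b))⁻¹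

lemma sum_inv_pow_mul_add_pow (n : ℕ) {a b : K} (ha : a ≠ 0) (hb : b ≠ 0) (hab : a + b ≠ 0) :
    ∑ j ∈ Icc 2 (n + 1), (a ^ (n + 2 - j) * (a + b) ^ j)⁻¹ + (b * (a + b) ^ (n + 1))⁻¹
      = tornheimTerm n a b := by
  have hfactor : ∑ j ∈ Icc 2 (n + 1), (a ^ (n + 2 - j) * (a + b) ^ j)⁻¹
      = a⁻¹ * ∑ j ∈ Ico 2 (n + 2), (a + b)⁻¹ ^ j * a⁻¹ ^ (n + 2 - 1 - j) := by
    rw [← Ico_add_one_right_eq_Icc, mul_sum]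
    refine sum_congr rfl fun j hj => ?_
    have := (mem_Ico.1 hj).2
    rw [show n + 2 - j = n + 2 - 1 - j + 1 by omega, mul_inv, ← inv_pow, ← inv_pow, pow_succ]
    ring
  have hne : (a + b)⁻¹ ≠ a⁻¹ := by simpa using hb
  have hdiff : (a + b)⁻¹ - a⁻¹ = -(b * a⁻¹ * (a + b)⁻¹) := by
    field_simp
    ring
  rw [hfactor, geom_sum₂_Ico hne (by omega), hdiff, tornheimTerm, Nat.add_sub_cancel]
  simp only [inv_pow]
  field_simp
  ring

lemma sum_inv_pow_mul_pow {n : ℕ} (hn : n ≠ 0) {a b : K} (ha : a ≠ 0) (hb : b ≠ 0) (hab : a ≠ b) :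
    ∑ j ∈ Icc 2 n, (a ^ j * b ^ (n + 2 - j))⁻¹ = tornheimTerm n a (-b) + tornheimTerm n b (-a) := by
  have hfactor : ∑ j ∈ Icc 2 n, (a ^ j * b ^ (n + 2 - j))⁻¹
      = b⁻¹ ^ 2 * ∑ j ∈ Ico 2 (n + 1), a⁻¹ ^ j * b⁻¹ ^ (n + 1 - 1 - j) := by
    rw [← Ico_add_one_right_eq_Icc, mul_sum]
    refine sum_congr rfl fun j hj => ?_
    have := (mem_Ico.1 hj).2
    rw [show n + 2 - j = n + 1 - 1 - j + 2 by omega, mul_inv, ← inv_pow, ← inv_pow, pow_add]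
    ring
  have hsub : a - b ≠ 0 := sub_ne_zero.2 hab
  have hdiff : a⁻¹ - b⁻¹ = -((a - b) * a⁻¹ * b⁻¹) := by
    field_simp
    ring
  obtain ⟨m, rfl⟩ := Nat.exists_eq_add_one_of_ne_zero hn
  rw [hfactor, geom_sum₂_Ico (by simpa using hab) (by omega), hdiff, tornheimTerm, tornheimTerm,
    show m + 1 + 1 - 2 = m by omega, ← sub_eq_add_neg, ← sub_eq_add_neg, ← neg_sub a b]
  simp only [inv_pow]
  field_simp
  ring

lemma sum_inv_pow_mul_pow_self {n : ℕ} (hn : n ≠ 0) (a : K) :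
    ∑ j ∈ Icc 2 n, (a ^ j * a ^ (n + 2 - j))⁻¹ = ((n : K) - 1) * (a ^ (n + 2))⁻¹ := by
  have hconst : ∀ j ∈ Icc 2 n, (a ^ j * a ^ (n + 2 - j))⁻¹ = (a ^ (n + 2))⁻¹ := by
    intro j hj
    rw [← pow_add, Nat.add_sub_cancel' (by have := mem_Icc.1 hj; omega)]
  rw [sum_congr rfl hconst, sum_const, Nat.card_Icc, nsmul_eq_mul, Nat.add_sub_add_right n 1 1,
    Nat.cast_sub (Nat.one_le_iff_ne_zero.2 hn), Nat.cast_one]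

lemma tornheimTerm_neg_self (n : ℕ) (a : K) : tornheimTerm n a (-a) = 0 := by
  simp [tornheimTerm]

lemma tornheimTerm_add_tornheimTerm_neg [DecidableEq K] (n : ℕ) {a b : K} (ha : a ≠ 0)
    (hb : b ≠ 0) (hab : a + b ≠ 0) :
    tornheimTerm n a b + tornheimTerm n a (-b)
      = (a ^ (n + 1))⁻¹ * ((b - a)⁻¹ - (a + b)⁻¹) + if b = a then (a ^ (n + 2))⁻¹ else 0 := by
  split_ifs with h
  · subst h
    have htwo : (2 : K) ≠ 0 := fun h => hab (by rw [← two_mul, h, zero_mul])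
    rw [tornheimTerm_neg_self, tornheimTerm, sub_self, inv_zero, ← two_mul]
    field_simp
    ring
  · have hsub : b - a ≠ 0 := sub_ne_zero.2 h
    rw [tornheimTerm, tornheimTerm, ← sub_eq_add_neg, ← neg_sub b a]
    field_simp
    ring

end PartialFractions

section Summability

lemma hasSum_ite_fst_eq_snd {ι M : Type*} [DecidableEq ι] [AddCommMonoid M] [TopologicalSpace M]
    {f : ι → M} {m : M} (hf : HasSum f m) :
    HasSum (fun z : ι × ι => if z.1 = z.2 then f z.1 else 0) m := by
  have hinj : Function.Injective fun i : ι => (i, i) := fun i j h => congrArg Prod.fst h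
  refine (hinj.hasSum_iff ?_).1 (by simpa [Function.comp_def] using hf)
  rintro ⟨i, j⟩ hij
  exact if_neg fun h : i = j => hij ⟨i, by rw [h]⟩

lemma mul_mul_le_sum_pow_three {x y z : ℝ} (hx : 0 ≤ x) (hy : 0 ≤ y) (hz : 0 ≤ z) :
    x * y * z ≤ x ^ 3 + y ^ 3 + z ^ 3 := by
  nlinarith [mul_nonneg (add_nonneg (add_nonneg hx hy) hz)
    (add_nonneg (add_nonneg (sq_nonneg (x - y)) (sq_nonneg (y - z))) (sq_nonneg (x - z))),
    mul_nonneg (mul_nonneg hx hy) hz]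

lemma abs_inv_mul_mul_le (x y z : ℝ) :
    |(x * y * z)⁻¹| ≤ |x| ^ (-(3 / 2) : ℝ) * |y| ^ (-(3 / 2) : ℝ)
      + |x| ^ (-(3 / 2) : ℝ) * |z| ^ (-(3 / 2) : ℝ)
      + |y| ^ (-(3 / 2) : ℝ) * |z| ^ (-(3 / 2) : ℝ) := by
  set r : ℝ → ℝ := fun t => |t| ^ (-(1 / 2) : ℝ)
  have hr (t : ℝ) : 0 ≤ r t := by positivity
  have hsq (t : ℝ) : |t|⁻¹ = r t ^ 2 := by
    rw [← Real.rpow_mul_natCast (abs_nonneg t), ← Real.rpow_neg_one]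
    norm_num
  have hcube (t : ℝ) : |t| ^ (-(3 / 2) : ℝ) = r t ^ 3 := by
    rw [← Real.rpow_mul_natCast (abs_nonneg t)]
    norm_num
  have hamgm := mul_mul_le_sum_pow_three (mul_nonneg (hr x) (hr y)) (mul_nonneg (hr x) (hr z))
    (mul_nonneg (hr y) (hr z))
  rw [abs_inv, abs_mul, abs_mul, mul_inv, mul_inv]
  simp only [hsq, hcube]
  linarith

-- Any two of `a`, `b`, `a + b` determine the pair `(a, b)`, so each of the three products in
-- `abs_inv_mul_mul_le` is summable.
lemma summable_tornheimTerm_one : Summable fun z : ℤ × ℤ => tornheimTerm 1 (z.1 : ℝ) z.2 := by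
  have hpow := Real.summable_abs_int_rpow (b := 3 / 2) (by norm_num)
  have hprod := hpow.mul_of_nonneg hpow (fun _ => by positivity) (fun _ => by positivity)
  have hinj₁ : Function.Injective fun z : ℤ × ℤ => (z.1, z.1 + z.2) := fun z w h => by
    grind
  have hinj₂ : Function.Injective fun z : ℤ × ℤ => (z.2, z.1 + z.2) := fun z w h => by
    grind
  refine Summable.of_norm_bounded
    ((hprod.add (hprod.comp_injective hinj₁)).add (hprod.comp_injective hinj₂)) fun z => ?_
  simpa only [tornheimTerm, pow_one, Function.comp_apply, Int.cast_add, Real.norm_eq_abs]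
    using abs_inv_mul_mul_le (z.1 : ℝ) z.2 (z.1 + z.2)

lemma summable_tornheimTerm {n : ℕ} (hn : n ≠ 0) :
    Summable fun z : ℤ × ℤ => tornheimTerm n (z.1 : ℝ) z.2 := by
  refine summable_tornheimTerm_one.norm.of_norm_bounded fun ⟨a, b⟩ => ?_
  rcases eq_or_ne a 0 with rfl | ha
  · simp [tornheimTerm, hn]
  have ha' : (1 : ℝ) ≤ |(a : ℝ)| := by
    exact_mod_cast Int.one_le_abs ha
  have hpow : |(a : ℝ)| ^ 1 ≤ |(a : ℝ)| ^ n :=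
    pow_le_pow_right₀ ha' (Nat.one_le_iff_ne_zero.2 hn)
  simp only [tornheimTerm, Real.norm_eq_abs, mul_inv, abs_mul, abs_inv, abs_pow]
  gcongr

end Summability

section OddNumbers

/-- The positive odd number `2 s + 1`, as a real number; `s : ℕ` indexes all sums over positive odd
numbers. -/
def nthOdd (s : ℕ) : ℝ := 2 * s + 1

lemma nthOdd_pos (s : ℕ) : 0 < nthOdd s := by
  unfold nthOdd
  positivity

lemma nthOdd_injective : Function.Injective nthOdd := fun s t h => by
  simpa [nthOdd] using h

lemma summable_tornheimTerm_nthOdd {n : ℕ} (hn : n ≠ 0) :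
    Summable fun z : ℕ × ℕ => tornheimTerm n (nthOdd z.1) (nthOdd z.2) := by
  have hinj : Function.Injective fun z : ℕ × ℕ => ((2 * z.1 + 1, 2 * z.2 + 1) : ℤ × ℤ) :=
    fun z w h => by grind
  simpa [Function.comp_def, nthOdd] using (summable_tornheimTerm hn).comp_injective hinj

lemma summable_tornheimTerm_nthOdd_neg {n : ℕ} (hn : n ≠ 0) :
    Summable fun z : ℕ × ℕ => tornheimTerm n (nthOdd z.1) (-nthOdd z.2) := by
  have hinj : Function.Injective fun z : ℕ × ℕ => ((2 * z.1 + 1, -(2 * z.2 + 1)) : ℤ × ℤ) :=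
    fun z w h => by grind
  simpa only [Function.comp_def, nthOdd, Int.cast_add, Int.cast_mul, Int.cast_neg, Int.cast_ofNat,
    Int.cast_one, Int.cast_natCast] using (summable_tornheimTerm hn).comp_injective hinj

lemma summable_inv_nthOdd_pow {j : ℕ} (hj : 2 ≤ j) : Summable fun s => (nthOdd s ^ j)⁻¹ := by
  have hinj : Function.Injective fun s : ℕ => 2 * s + 1 := fun s t h => by grind
  simpa [Function.comp_def, nthOdd]
    using (Real.summable_nat_pow_inv.2 (show 1 < j by omega)).comp_injective hinj

lemma summable_inv_nthOdd_pow_mul_add_pow {i j : ℕ} (hi : i ≠ 0) (hj : 2 ≤ j) :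
    Summable fun z : ℕ × ℕ => (nthOdd z.1 ^ i * (nthOdd z.1 + nthOdd z.2) ^ j)⁻¹ := by
  refine (summable_tornheimTerm_nthOdd hi).of_nonneg_of_le (fun z => ?_) (fun z => ?_)
  all_goals have ha := nthOdd_pos z.1; have hb := nthOdd_pos z.2
  · positivity
  have hone : 1 ≤ nthOdd z.1 + nthOdd z.2 := by
    unfold nthOdd at hb ⊢
    linarith [(Nat.cast_nonneg z.1 : (0 : ℝ) ≤ z.1)]
  have hpow : nthOdd z.2 * (nthOdd z.1 + nthOdd z.2) ≤ (nthOdd z.1 + nthOdd z.2) ^ j :=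
    calc nthOdd z.2 * (nthOdd z.1 + nthOdd z.2)
        ≤ (nthOdd z.1 + nthOdd z.2) ^ 2 := by nlinarith
      _ ≤ (nthOdd z.1 + nthOdd z.2) ^ j := pow_le_pow_right₀ hone hj
  rw [tornheimTerm, mul_assoc]
  gcongr

end OddNumbers

section Telescoping

lemma tendsto_sum_range_sub_shift {E : Type*} [AddCommGroup E] [TopologicalSpace E]
    [IsTopologicalAddGroup E] {g : ℕ → E} (hg : Tendsto g atTop (𝓝 0)) (m : ℕ) :
    Tendsto (fun N => ∑ t ∈ range N, (g t - g (t + m))) atTop (𝓝 (∑ i ∈ range m, g i)) := by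
  have htail : Tendsto (fun N => ∑ i ∈ range m, g (N + i)) atTop (𝓝 0) := by
    simpa only [sum_const_zero, Function.comp_def, add_comm] using
      tendsto_finsetSum (range m) fun i _ => hg.comp (tendsto_add_atTop_nat i)
  have hsplit (N : ℕ) : ∑ t ∈ range N, (g t - g (t + m))
      = ∑ i ∈ range m, g i - ∑ i ∈ range m, g (N + i) := by
    rw [sum_sub_distrib, sub_eq_sub_iff_add_eq_add, ← sum_range_add, add_comm N m, sum_range_add]
    simp only [add_comm m]
  simpa only [hsplit, sub_zero] using htail.const_sub (∑ i ∈ range m, g i)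

lemma sum_range_inv_natCast_sub_eq_zero (s : ℕ) :
    ∑ i ∈ range (2 * s + 1), ((i : ℝ) - s)⁻¹ = 0 := by
  have hodd : ∑ i ∈ range (2 * s + 1), ((i : ℝ) - s)⁻¹
      = -∑ i ∈ range (2 * s + 1), ((i : ℝ) - s)⁻¹ := by
    rw [← sum_neg_distrib]
    refine (sum_range_reflect _ _).symm.trans <| sum_congr rfl fun i hi => ?_
    have := mem_range.1 hi
    rw [show 2 * s + 1 - 1 - i = 2 * s - i by omega, Nat.cast_sub (by omega), ← inv_neg]
    congr 1
    push_cast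
    ring
  linarith

lemma tendsto_sum_range_inv_nthOdd_sub_inv_nthOdd_add (s : ℕ) :
    Tendsto (fun N => ∑ t ∈ range N, ((nthOdd t - nthOdd s)⁻¹ - (nthOdd s + nthOdd t)⁻¹))
      atTop (𝓝 0) := by
  have hlim : Tendsto (fun t : ℕ => ((t : ℝ) - s)⁻¹) atTop (𝓝 0) :=
    tendsto_inv_atTop_zero.comp (tendsto_atTop_add_const_right _ _ tendsto_natCast_atTop_atTop)
  have htele := (tendsto_sum_range_sub_shift hlim (2 * s + 1)).const_mul 2⁻¹
  rw [sum_range_inv_natCast_sub_eq_zero, mul_zero] at htele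
  have hterm (t : ℕ) : (nthOdd t - nthOdd s)⁻¹ - (nthOdd s + nthOdd t)⁻¹
      = 2⁻¹ * (((t : ℝ) - s)⁻¹ - (((t + (2 * s + 1) : ℕ) : ℝ) - s)⁻¹) := by
    rw [mul_sub, ← mul_inv, ← mul_inv, nthOdd, nthOdd]
    push_cast
    ring_nf
  simpa only [hterm, ← mul_sum] using htele

lemma hasSum_tornheimTerm_nthOdd_add_neg {n : ℕ} (hn : n ≠ 0) (s : ℕ) :
    HasSum (fun t => tornheimTerm n (nthOdd s) (nthOdd t) + tornheimTerm n (nthOdd s) (-nthOdd t))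
      (nthOdd s ^ (n + 2))⁻¹ := by
  have hsummable := ((summable_tornheimTerm_nthOdd hn).add
    (summable_tornheimTerm_nthOdd_neg hn)).prod_factor s
  have hterm (t : ℕ) :
      tornheimTerm n (nthOdd s) (nthOdd t) + tornheimTerm n (nthOdd s) (-nthOdd t)
        = (nthOdd s ^ (n + 1))⁻¹ * ((nthOdd t - nthOdd s)⁻¹ - (nthOdd s + nthOdd t)⁻¹)
          + if t = s then (nthOdd s ^ (n + 2))⁻¹ else 0 := by
    have ha := nthOdd_pos s
    have hb := nthOdd_pos t
    simp only [tornheimTerm_add_tornheimTerm_neg n ha.ne' hb.ne' (add_pos ha hb).ne',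
      nthOdd_injective.eq_iff]
  rw [hsummable.hasSum_iff_tendsto_nat]
  simpa only [hterm, sum_add_distrib, ← mul_sum, mul_zero, zero_add] using
    ((tendsto_sum_range_inv_nthOdd_sub_inv_nthOdd_add s).const_mul (nthOdd s ^ (n + 1))⁻¹).add
      (hasSum_ite_eq s (nthOdd s ^ (n + 2))⁻¹).tendsto_sum_nat

end Telescoping

section MultipleTValues

/-- The summation range of a multiple `T`-value of depth `r`. -/
abbrev AlternatingParitySeq (r : ℕ) : Type :=
  {f : Fin r → ℕ // StrictMono f ∧ ∀ i, f i % 2 = ((i : ℕ) + 1) % 2}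

/-- The odd number `2 s + 1`, regarded as a sequence of length one, corresponds to `s`. -/
def alternatingParitySeqOneEquiv : AlternatingParitySeq 1 ≃ ℕ where
  toFun f := f.1 0 / 2
  invFun s := ⟨fun _ => 2 * s + 1, Subsingleton.strictMono _, fun i => by
    simp only [Fin.val_eq_zero]
    omega⟩
  left_inv f := by
    ext i
    have := f.2.2 0
    rw [Subsingleton.elim i 0]
    simp only [Fin.val_zero] at this ⊢
    omega
  right_inv s := show (2 * s + 1) / 2 = s by
    omega

/-- A pair `(m₁, m₂)` corresponds to `(s, t)` with `m₁ = 2 s + 1` and `m₂ - m₁ = 2 t + 1`, both of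
which are arbitrary positive odd numbers. -/
def alternatingParitySeqTwoEquiv : AlternatingParitySeq 2 ≃ ℕ × ℕ where
  toFun f := (f.1 0 / 2, (f.1 1 - f.1 0) / 2)
  invFun z := ⟨![2 * z.1 + 1, (2 * z.1 + 1) + (2 * z.2 + 1)],
    Fin.strictMono_iff_lt_succ.2 fun i => by simp [Subsingleton.elim i 0],
    Fin.forall_fin_two.2 ⟨by simp, by simp; omega⟩⟩
  left_inv f := by
    have h₀ : f.1 0 % 2 = 1 := f.2.2 0
    have h₁ : f.1 1 % 2 = 0 := f.2.2 1
    have hlt : f.1 0 < f.1 1 := f.2.1 Fin.zero_lt_one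
    ext i
    fin_cases i <;> simp <;> omega
  right_inv z := by
    ext <;> simp <;> omega

lemma MTV_singleton (j : ℕ) : MTV [j] = 2 * ∑' s, (nthOdd s ^ j)⁻¹ := by
  change 2 ^ 1 * ∑' f : AlternatingParitySeq 1, ∏ i : Fin 1, (1 : ℝ) / (f.1 i : ℝ) ^ [j].get i = _
  rw [← alternatingParitySeqOneEquiv.symm.tsum_eq]
  simp [alternatingParitySeqOneEquiv, nthOdd]

lemma MTV_pair (i j : ℕ) :
    MTV [i, j] = 4 * ∑' z : ℕ × ℕ, (nthOdd z.1 ^ i * (nthOdd z.1 + nthOdd z.2) ^ j)⁻¹ := by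
  change 2 ^ 2 * ∑' f : AlternatingParitySeq 2,
    ∏ l : Fin 2, (1 : ℝ) / (f.1 l : ℝ) ^ [i, j].get l = _
  rw [← alternatingParitySeqTwoEquiv.symm.tsum_eq]
  norm_num [alternatingParitySeqTwoEquiv, nthOdd, Fin.prod_univ_two, mul_comm]

lemma hasSum_MTV_singleton {j : ℕ} (hj : 2 ≤ j) :
    HasSum (fun s => (nthOdd s ^ j)⁻¹) (MTV [j] / 2) := by
  rw [MTV_singleton, mul_div_cancel_left₀ _ two_ne_zero]
  exact (summable_inv_nthOdd_pow hj).hasSum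

lemma hasSum_MTV_pair {i j : ℕ} (hi : i ≠ 0) (hj : 2 ≤ j) :
    HasSum (fun z : ℕ × ℕ => (nthOdd z.1 ^ i * (nthOdd z.1 + nthOdd z.2) ^ j)⁻¹)
      (MTV [i, j] / 4) := by
  rw [MTV_pair, mul_div_cancel_left₀ _ four_ne_zero]
  exact (summable_inv_nthOdd_pow_mul_add_pow hi hj).hasSum

lemma hasSum_MTV_mul_MTV {i j : ℕ} (hi : 2 ≤ i) (hj : 2 ≤ j) :
    HasSum (fun z : ℕ × ℕ => (nthOdd z.1 ^ i * nthOdd z.2 ^ j)⁻¹) (MTV [i] * MTV [j] / 4) := by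
  have hsummable := summable_mul_of_summable_norm (summable_inv_nthOdd_pow hi).norm
    (summable_inv_nthOdd_pow hj).norm
  have hprod := (hasSum_MTV_singleton hi).mul (hasSum_MTV_singleton hj) hsummable
  rw [div_mul_div_comm, show (2 : ℝ) * 2 = 4 by norm_num] at hprod
  simpa only [mul_inv] using hprod

lemma four_mul_tsum_tornheimTerm_nthOdd {n : ℕ} (hn : n ≠ 0) :
    4 * ∑' z : ℕ × ℕ, tornheimTerm n (nthOdd z.1) (nthOdd z.2)
      = ∑ j ∈ Icc 2 (n + 1), MTV [n + 2 - j, j] + MTV [1, n + 1] := by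
  have hsum : HasSum (fun z : ℕ × ℕ => ∑ j ∈ Icc 2 (n + 1),
      (nthOdd z.1 ^ (n + 2 - j) * (nthOdd z.1 + nthOdd z.2) ^ j)⁻¹)
      (∑ j ∈ Icc 2 (n + 1), MTV [n + 2 - j, j] / 4) := by
    refine hasSum_sum fun j hj => ?_
    have := mem_Icc.1 hj
    exact hasSum_MTV_pair (by omega) (by omega)
  have hlast := (Equiv.prodComm ℕ ℕ).hasSum_iff.2
    (hasSum_MTV_pair one_ne_zero (show 2 ≤ n + 1 by omega))
  have hterm (z : ℕ × ℕ) : tornheimTerm n (nthOdd z.1) (nthOdd z.2)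
      = ∑ j ∈ Icc 2 (n + 1), (nthOdd z.1 ^ (n + 2 - j) * (nthOdd z.1 + nthOdd z.2) ^ j)⁻¹
        + (nthOdd z.2 ^ 1 * (nthOdd z.2 + nthOdd z.1) ^ (n + 1))⁻¹ := by
    have ha := nthOdd_pos z.1
    have hb := nthOdd_pos z.2
    rw [pow_one, add_comm (nthOdd z.2),
      sum_inv_pow_mul_add_pow n ha.ne' hb.ne' (add_pos ha hb).ne']
  have htsum := ((hsum.add hlast).congr_fun hterm).tsum_eq
  rw [htsum, ← sum_div]
  ring

lemma sum_MTV_mul_MTV {n : ℕ} (hn : n ≠ 0) :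
    ∑ j ∈ Icc 2 n, MTV [j] * MTV [n + 2 - j]
      = 8 * ∑' z : ℕ × ℕ, tornheimTerm n (nthOdd z.1) (-nthOdd z.2)
        + 2 * (n - 1) * MTV [n + 2] := by
  have hprod : HasSum (fun z : ℕ × ℕ => ∑ j ∈ Icc 2 n,
      (nthOdd z.1 ^ j * nthOdd z.2 ^ (n + 2 - j))⁻¹)
      (∑ j ∈ Icc 2 n, MTV [j] * MTV [n + 2 - j] / 4) := by
    refine hasSum_sum fun j hj => ?_
    have := mem_Icc.1 hj
    exact hasSum_MTV_mul_MTV (by omega) (by omega)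
  have hneg := (summable_tornheimTerm_nthOdd_neg hn).hasSum
  have hdiag := hasSum_ite_fst_eq_snd
    ((hasSum_MTV_singleton (show 2 ≤ n + 2 by omega)).mul_left ((n : ℝ) - 1))
  have hterm (z : ℕ × ℕ) : ∑ j ∈ Icc 2 n, (nthOdd z.1 ^ j * nthOdd z.2 ^ (n + 2 - j))⁻¹
      = tornheimTerm n (nthOdd z.1) (-nthOdd z.2) + tornheimTerm n (nthOdd z.2) (-nthOdd z.1)
        + if z.1 = z.2 then (n - 1) * (nthOdd z.1 ^ (n + 2))⁻¹ else 0 := by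
    split_ifs with h
    · rw [h, sum_inv_pow_mul_pow_self hn, tornheimTerm_neg_self, zero_add, zero_add]
    · rw [sum_inv_pow_mul_pow hn (nthOdd_pos _).ne' (nthOdd_pos _).ne' (nthOdd_injective.ne h),
        add_zero]
  have hswap := (Equiv.prodComm ℕ ℕ).hasSum_iff.2 hneg
  simp only [hterm] at hprod
  have hunique := hprod.unique ((hneg.add hswap).add hdiag)
  rw [← sum_div] at hunique
  linarith

lemma tsum_tornheimTerm_nthOdd_add_tsum_neg {n : ℕ} (hn : n ≠ 0) :
    ∑' z : ℕ × ℕ, tornheimTerm n (nthOdd z.1) (nthOdd z.2)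
      + ∑' z : ℕ × ℕ, tornheimTerm n (nthOdd z.1) (-nthOdd z.2) = MTV [n + 2] / 2 := by
  have hdouble := (summable_tornheimTerm_nthOdd hn).hasSum.add
    (summable_tornheimTerm_nthOdd_neg hn).hasSum
  exact (hdouble.prod_fiberwise fun s => hasSum_tornheimTerm_nthOdd_add_neg hn s).unique
    (hasSum_MTV_singleton (by omega))

end MultipleTValues

/-- **Lemma (sum formula in depth 2).** For every integer `k ≥ 3`,
`∑_{j=2}^{k−1} T(k−j, j) + T(1, k−1) = (k−1) T(k) − (1/2) ∑_{j=2}^{k−2} T(j) T(k−j)`. -/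
theorem MTV_sum_depth2 (k : ℕ) (hk : 3 ≤ k) :
    (∑ j ∈ Finset.Icc 2 (k - 1), MTV [k - j, j]) + MTV [1, k - 1]
      = ((k : ℝ) - 1) * MTV [k]
        - (1 / 2) * ∑ j ∈ Finset.Icc 2 (k - 2), MTV [j] * MTV [k - j] := by
  obtain ⟨n, rfl⟩ : ∃ n, k = n + 2 := ⟨k - 2, by omega⟩
  have hn : n ≠ 0 := by omega
  have hpair := four_mul_tsum_tornheimTerm_nthOdd hn
  have hprod := sum_MTV_mul_MTV hn
  have htotal := tsum_tornheimTerm_nthOdd_add_tsum_neg hn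
  rw [show n + 2 - 1 = n + 1 by omega, Nat.add_sub_cancel, ← hpair, hprod]
  push_cast
  linarith
end

section
/- For every integer k ≥ 3, 4 ζ^{eo}(1, k−1) = (k−1) T(k) − (2 log 2) T(k−1) − (1/2) ∑_{j=2}^{k−2} T(j) T(k−j), where ζ^{eo}(1, k−1) := ∑_{0<n<m, n even, m odd} 1/(n · m^{k−1}). -/
/-- The even-odd double zeta value
`ζ^{eo}(1, k−1) := ∑_{0<n<m, n even, m odd} 1/(n · m^{k−1})`. -/
noncomputable def zetaEO (k : ℕ) : ℝ :=
  ∑' p : {p : ℕ × ℕ // 0 < p.1 ∧ p.1 < p.2 ∧ p.1 % 2 = 0 ∧ p.2 % 2 = 1},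
    1 / ((p.1.1 : ℝ) * (p.1.2 : ℝ) ^ (k - 1))

/-!
Consider the double series `D = ∑ 1 / (m ^ (k - 2) m' (m' - m))` over odd positive `m ≠ m'`.

Summing over `m'` first, the partial fractions `1 / (m' (m' - m)) = (1 / (m' - m) - 1 / m') / m`
leave `(-log 2 + 1 / m - ∑ 1 / n) / m`, with `n` running over the even numbers `0 < n < m`; the
logarithm is the limit of `H_n - H_{2n}`. Hence `D + ζ^{eo}(1, k-1)` is a combination of
`T(k)` and `log 2 * T(k-1)`.

Symmetrising in `m` and `m'` instead, the geometric sum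
`(1/m - 1/m') ∑_{j=2}^{k-2} m ^ (-j) m' ^ (j-k) = (m m') ^ (-2) (m ^ (3-k) - m' ^ (3-k))` turns
`2 D` into the sum of the products `T(j) T(k-j) / 4`, less their diagonal terms `m = m'`.
-/

open Filter Finset Topology

theorem sum_Icc_pow_mul_pow_mul_sub {R : Type*} [CommRing R] (x y : R) (k : ℕ) :
    (∑ j ∈ Icc 2 (k - 2), x ^ j * y ^ (k - j)) * (x - y) =
      x ^ 2 * y ^ 2 * (x ^ (k - 3) - y ^ (k - 3)) := by
  obtain hk | hk := lt_or_ge k 3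
  · interval_cases k <;> simp
  obtain ⟨n, rfl⟩ := Nat.exists_eq_add_of_le' hk
  have hIcc : Icc 2 (n + 3 - 2) = Ico 2 (n + 2) := rfl
  have hfactor : ∀ j ∈ Ico 2 (n + 2),
      x ^ j * y ^ (n + 3 - j) = y ^ 2 * (x ^ j * y ^ (n + 2 - 1 - j)) := fun j hj ↦ by
    rw [show n + 3 - j = n + 2 - 1 - j + 2 by grind]
    ring
  rw [hIcc, sum_congr rfl hfactor, ← mul_sum, mul_assoc,
    (Commute.all x y).geom_sum₂_Ico_mul (Nat.le_add_left 2 n)]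
  simp only [Nat.add_sub_cancel]
  ring

theorem sum_range_inv_natCast_sub {K : Type*} [Field K] [CharZero K] (a n : ℕ) :
    ∑ b ∈ range (a + 1 + n), ((b : K) - a)⁻¹ = harmonic n - harmonic a := by
  have hbelow : ∑ b ∈ range a, ((b : K) - a)⁻¹ = -harmonic a := by
    rw [← sum_range_reflect, harmonic]
    push_cast
    rw [← sum_neg_distrib]
    refine sum_congr rfl fun i hi ↦ ?_
    have hia : i + 1 ≤ a := mem_range.mp hi
    rw [Nat.sub_sub, add_comm 1 i, Nat.cast_sub hia, ← inv_neg]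
    push_cast
    ring
  have habove : ∑ i ∈ range n, (((a + 1 + i : ℕ) : K) - a)⁻¹ = harmonic n := by
    rw [harmonic]
    push_cast
    exact sum_congr rfl fun i _ ↦ by ring
  rw [sum_range_add, sum_range_succ, hbelow, habove, sub_self, inv_zero]
  ring

theorem tendsto_sum_range_add_sub_sum_range {E : Type*} [AddCommGroup E] [TopologicalSpace E]
    [ContinuousAdd E] {f : ℕ → E} (hf : Tendsto f atTop (𝓝 0)) (c : ℕ) :
    Tendsto (fun n ↦ ∑ i ∈ range (n + c), f i - ∑ i ∈ range n, f i) atTop (𝓝 0) := by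
  simp only [sum_range_add, add_sub_cancel_left]
  simpa using tendsto_finsetSum (range c) fun i _ ↦ hf.comp (tendsto_add_atTop_nat i)

theorem tendsto_harmonic_two_mul_sub_harmonic :
    Tendsto (fun n : ℕ ↦ (harmonic (2 * n) - harmonic n : ℝ)) atTop (𝓝 (Real.log 2)) := by
  have hdouble : Tendsto (fun n : ℕ ↦ 2 * n) atTop atTop :=
    tendsto_id.const_mul_atTop' two_pos
  have hlim := ((Real.tendsto_harmonic_sub_log.comp hdouble).sub
    Real.tendsto_harmonic_sub_log).add_const (Real.log 2)
  rw [sub_self, zero_add] at hlim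
  refine hlim.congr' ?_
  filter_upwards [eventually_ne_atTop 0] with n hn
  have hlog : Real.log (2 * n : ℕ) = Real.log 2 + Real.log n := by
    rw [Nat.cast_mul, Real.log_mul (by norm_num) (by exact_mod_cast hn), Nat.cast_two]
  rw [Function.comp_apply, hlog]
  ring

theorem hasSum_ite_eq_diag {ι M : Type*} [DecidableEq ι] [AddCommMonoid M] [TopologicalSpace M]
    {f : ι → M} {s : M} (hf : HasSum f s) :
    HasSum (fun p : ι × ι ↦ if p.1 = p.2 then f p.1 else 0) s := by
  have hinj : Function.Injective fun i : ι ↦ (i, i) := fun i j h ↦ congrArg Prod.fst h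
  refine (hinj.hasSum_iff fun p hp ↦ if_neg fun h ↦ hp ⟨p.1, Prod.ext rfl h⟩).mp ?_
  simpa [Function.comp_def] using hf

theorem summable_mul_comp_sub {ι G R : Type*} [AddGroup G] [NormedRing R] [CompleteSpace R]
    {φ : ι → G} (hφ : Function.Injective φ) {f : ι → R} {g : G → R}
    (hf : Summable fun i ↦ ‖f i‖) (hg : Summable fun d ↦ ‖g d‖) :
    Summable fun p : ι × ι ↦ f p.1 * g (φ p.2 - φ p.1) := by
  refine (summable_mul_of_summable_norm hf hg).comp_injective
    (i := fun p : ι × ι ↦ (p.1, φ p.2 - φ p.1)) fun p q hpq ↦ ?_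
  obtain ⟨hfst, hsub⟩ := Prod.mk.inj hpq
  rw [hfst, sub_left_inj] at hsub
  exact Prod.ext hfst (hφ hsub)

/-- This holds because the largest of `x`, `y`, `|y - x|` is at least the geometric mean of the
other two. -/
theorem inv_mul_inv_mul_inv_abs_sub_le {x y : ℝ} (hx : 0 < x) (hy : 0 < y) :
    x⁻¹ * y⁻¹ * |y - x|⁻¹ ≤
      x ^ (-(3 / 2) : ℝ) * |y - x| ^ (-(3 / 2) : ℝ) +
        y ^ (-(3 / 2) : ℝ) * |y - x| ^ (-(3 / 2) : ℝ) := by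
  wlog hxy : x ≤ y generalizing x y
  · simpa only [abs_sub_comm, mul_comm, add_comm] using this hy hx (le_of_not_ge hxy)
  refine le_add_of_le_of_nonneg ?_ (by positivity)
  rcases hxy.eq_or_lt with rfl | hlt
  · simp
  have hd : 0 < |y - x| := abs_pos.mpr (sub_ne_zero.mpr hlt.ne')
  have hdy : |y - x| ≤ y := by rw [abs_of_pos (sub_pos.mpr hlt)]; linarith
  have hsplit : ∀ {t : ℝ}, 0 < t → t ^ (-(3 / 2) : ℝ) = t⁻¹ * t ^ (-(1 / 2) : ℝ) := fun ht ↦ by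
    rw [← Real.rpow_neg_one, ← Real.rpow_add ht]
    norm_num
  have hyinv : y⁻¹ ≤ x ^ (-(1 / 2) : ℝ) * |y - x| ^ (-(1 / 2) : ℝ) := calc
    y⁻¹ = y ^ (-(1 / 2) : ℝ) * y ^ (-(1 / 2) : ℝ) := by
      rw [← Real.rpow_neg_one, ← Real.rpow_add hy]
      norm_num
    _ ≤ x ^ (-(1 / 2) : ℝ) * |y - x| ^ (-(1 / 2) : ℝ) := by
      gcongr ?_ * ?_
      · exact Real.rpow_le_rpow_of_nonpos hx hxy (by norm_num)
      · exact Real.rpow_le_rpow_of_nonpos hd hdy (by norm_num)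
  calc x⁻¹ * y⁻¹ * |y - x|⁻¹
      ≤ x⁻¹ * (x ^ (-(1 / 2) : ℝ) * |y - x| ^ (-(1 / 2) : ℝ)) * |y - x|⁻¹ := by gcongr
    _ = x ^ (-(3 / 2) : ℝ) * |y - x| ^ (-(3 / 2) : ℝ) := by rw [hsplit hx, hsplit hd]; ring

/-- The reciprocal of the odd number `2 * a + 1`, so that `T(k) = 2 ∑ₐ (oddRecip a) ^ k`. -/
noncomputable def oddRecip (a : ℕ) : ℝ := (2 * (a : ℝ) + 1)⁻¹

theorem oddRecip_pos (a : ℕ) : 0 < oddRecip a := by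
  unfold oddRecip
  positivity

theorem oddRecip_le_one (a : ℕ) : oddRecip a ≤ 1 :=
  inv_le_one_of_one_le₀ (by linarith [a.cast_nonneg (α := ℝ)])

theorem strictMono_two_mul_add_one : StrictMono fun a : ℕ ↦ 2 * a + 1 :=
  fun _ _ h ↦ by grind

theorem oddRecip_sub_oddRecip (a b : ℕ) :
    oddRecip a - oddRecip b = 2 * ((b : ℝ) - a) * (oddRecip a * oddRecip b) := by
  unfold oddRecip
  field_simp
  ring

theorem tendsto_oddRecip : Tendsto oddRecip atTop (𝓝 0) :=
  (tendsto_inv_atTop_nhds_zero_nat.comp strictMono_two_mul_add_one.tendsto_atTop).congr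
    fun a ↦ by simp [oddRecip]

theorem summable_oddRecip_pow {k : ℕ} (hk : 2 ≤ k) : Summable fun a ↦ oddRecip a ^ k := by
  simpa [Function.comp_def, oddRecip] using
    (Real.summable_nat_pow_inv.mpr hk).comp_injective strictMono_two_mul_add_one.injective

theorem sum_range_oddRecip (n : ℕ) :
    ∑ a ∈ range n, oddRecip a = harmonic (2 * n) - harmonic n / 2 := by
  induction n with
  | zero => simp
  | succ n ih =>
    rw [sum_range_succ, ih, Nat.mul_succ, harmonic_succ, harmonic_succ, harmonic_succ, oddRecip]
    push_cast
    field_simp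
    ring

theorem tendsto_half_harmonic_sub_sum_oddRecip (c : ℕ) :
    Tendsto (fun n ↦ (harmonic n / 2 - ∑ a ∈ range (n + c), oddRecip a : ℝ)) atTop
      (𝓝 (-Real.log 2)) := by
  have hlim := tendsto_harmonic_two_mul_sub_harmonic.neg.sub
    (tendsto_sum_range_add_sub_sum_range tendsto_oddRecip c)
  rw [sub_zero] at hlim
  refine hlim.congr fun n ↦ ?_
  rw [sum_range_oddRecip n]
  ring

/-- The index set of the series defining `MTV [k]`, parametrised by `a ↦ 2 * a + 1`. -/
def oddIndexEquiv :
    ℕ ≃ {f : Fin 1 → ℕ // StrictMono f ∧ ∀ i, f i % 2 = ((i : ℕ) + 1) % 2} where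
  toFun a := ⟨fun _ ↦ 2 * a + 1, Subsingleton.strictMono _, fun i ↦ by grind⟩
  invFun f := f.1 0 / 2
  left_inv a := by grind
  right_inv f := by
    ext i
    have hodd : f.1 0 % 2 = 1 := f.2.2 0
    rw [Subsingleton.elim i 0]
    grind

theorem MTV_singleton_s15 (k : ℕ) : MTV [k] = 2 * ∑' a, oddRecip a ^ k := by
  have hreindex := oddIndexEquiv.tsum_eq fun f ↦ ∏ i : Fin 1, (1 : ℝ) / (f.1 i : ℝ) ^ [k].get i
  calc MTV [k] = 2 ^ 1 * ∑' a, ∏ i, (1 : ℝ) / ((oddIndexEquiv a).1 i : ℝ) ^ [k].get i :=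
        congrArg _ hreindex.symm
    _ = 2 * ∑' a, oddRecip a ^ k := by simp [oddIndexEquiv, oddRecip]

theorem hasSum_oddRecip_pow {k : ℕ} (hk : 2 ≤ k) :
    HasSum (fun a ↦ oddRecip a ^ k) (MTV [k] / 2) := by
  rw [MTV_singleton_s15, mul_div_cancel_left₀ _ two_ne_zero]
  exact (summable_oddRecip_pow hk).hasSum

theorem hasSum_oddRecip_pow_mul_pow {i j : ℕ} (hi : 2 ≤ i) (hj : 2 ≤ j) :
    HasSum (fun p : ℕ × ℕ ↦ oddRecip p.1 ^ i * oddRecip p.2 ^ j)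
      (MTV [i] / 2 * (MTV [j] / 2)) :=
  HasSum.mul (f := fun a ↦ oddRecip a ^ i) (g := fun b ↦ oddRecip b ^ j)
    (hasSum_oddRecip_pow hi) (hasSum_oddRecip_pow hj)
    (summable_mul_of_summable_norm (summable_oddRecip_pow hi).norm (summable_oddRecip_pow hj).norm)

/-- The index set of the series defining `zetaEO`, with the pair `(2 * (i + 1), 2 * a + 1)`
recorded as `i : Fin a`. -/
def evenOddIndexEquiv :
    (Σ a : ℕ, Fin a) ≃ {p : ℕ × ℕ // 0 < p.1 ∧ p.1 < p.2 ∧ p.1 % 2 = 0 ∧ p.2 % 2 = 1} where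
  toFun s := ⟨(2 * (s.2 + 1), 2 * s.1 + 1), by grind⟩
  invFun p := ⟨p.1.2 / 2, p.1.1 / 2 - 1, by grind⟩
  left_inv := by
    rintro ⟨a, i, hi⟩
    have ha : (2 * a + 1) / 2 = a := by omega
    refine Sigma.ext ha ((Fin.heq_ext_iff ha).mpr ?_)
    grind
  right_inv p := by
    ext <;> grind

theorem zetaEO_eq_of_hasSum {k : ℕ} {s : ℝ}
    (hs : HasSum (fun a ↦ oddRecip a ^ (k - 1) * (harmonic a / 2)) s) : zetaEO k = s := by
  let f : (Σ a : ℕ, Fin a) → ℝ := fun q ↦ oddRecip q.1 ^ (k - 1) * (2 * ((q.2 : ℝ) + 1))⁻¹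
  have hf_nonneg : ∀ q, 0 ≤ f q := fun q ↦ by
    have := oddRecip_pos q.1
    positivity
  have hfiber : ∀ a, HasSum (fun i ↦ f ⟨a, i⟩) (oddRecip a ^ (k - 1) * (harmonic a / 2)) := by
    intro a
    convert hasSum_fintype fun i ↦ f ⟨a, i⟩ using 1
    simp only [f]
    rw [← mul_sum, Fin.sum_univ_eq_sum_range fun i ↦ (2 * ((i : ℝ) + 1))⁻¹, harmonic,
      div_eq_inv_mul]
    push_cast
    simp only [mul_sum, mul_inv]
  have hf : Summable f := (summable_sigma_of_nonneg hf_nonneg).mpr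
    ⟨fun a ↦ (hfiber a).summable, by simpa only [(hfiber _).tsum_eq] using hs.summable⟩
  calc zetaEO k = ∑' q, f q := by
        rw [zetaEO, ← evenOddIndexEquiv.tsum_eq]
        refine tsum_congr fun q ↦ ?_
        simp [evenOddIndexEquiv, f, oddRecip, mul_comm]
    _ = s := (hs.sigma_of_hasSum hfiber hf).tsum_eq

/-- The kernel `1 / (m' (m' - m))` at `m = 2 * a + 1` and `m' = 2 * b + 1`. Division by zero makes
it vanish on the diagonal, so that sums over it run over `m ≠ m'`. -/
noncomputable def oddKernel (a b : ℕ) : ℝ := oddRecip b / (2 * ((b : ℝ) - a))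

/-- The double series `∑ 1 / (m ^ n m' (m' - m))` over odd `m ≠ m'`. -/
noncomputable def oddKernelSum (n : ℕ) : ℝ :=
  ∑' p : ℕ × ℕ, oddRecip p.1 ^ n * oddKernel p.1 p.2

theorem oddKernel_self (a : ℕ) : oddKernel a a = 0 := by
  simp [oddKernel]

theorem oddKernel_eq (a b : ℕ) :
    oddKernel a b = oddRecip a * (((b : ℝ) - a)⁻¹ / 2 - oddRecip b) +
      if b = a then oddRecip a ^ 2 else 0 := by
  split_ifs with h
  · subst h
    rw [oddKernel_self, sub_self, inv_zero]
    ring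
  · have hba : (b : ℝ) - a ≠ 0 := sub_ne_zero.mpr (by exact_mod_cast h)
    unfold oddKernel oddRecip
    field_simp
    ring

theorem sum_range_oddKernel (a n : ℕ) :
    ∑ b ∈ range (a + 1 + n), oddKernel a b =
      oddRecip a * ((harmonic n / 2 - ∑ b ∈ range (n + (a + 1)), oddRecip b)
        + oddRecip a - harmonic a / 2) := by
  have hmem : a ∈ range (a + 1 + n) := mem_range.mpr (by lia)
  simp only [oddKernel_eq, sum_add_distrib, sum_ite_eq', if_pos hmem]
  rw [← mul_sum, sum_sub_distrib, ← sum_div, sum_range_inv_natCast_sub, add_comm n]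
  ring

theorem abs_oddRecip_pow_mul_oddKernel_le {n : ℕ} (hn : n ≠ 0) (a b : ℕ) :
    |oddRecip a ^ n * oddKernel a b| ≤
      (2 * (a : ℝ) + 1)⁻¹ * (2 * (b : ℝ) + 1)⁻¹ * |(2 * (b : ℝ) + 1) - (2 * a + 1)|⁻¹ := by
  have hsub : (2 * (b : ℝ) + 1) - (2 * a + 1) = 2 * (b - a) := by ring
  have ha := oddRecip_pos a
  calc |oddRecip a ^ n * oddKernel a b|
      = oddRecip a ^ n * oddRecip b * |2 * ((b : ℝ) - a)|⁻¹ := by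
        rw [oddKernel, abs_mul, abs_div, abs_of_pos (oddRecip_pos b), abs_of_pos (pow_pos ha n)]
        ring
    _ ≤ oddRecip a * oddRecip b * |2 * ((b : ℝ) - a)|⁻¹ := by
        have := (oddRecip_pos b).le
        gcongr
        exact pow_le_of_le_one ha.le (oddRecip_le_one a) hn
    _ = _ := by rw [hsub, oddRecip, oddRecip]

theorem summable_oddRecip_pow_mul_oddKernel {n : ℕ} (hn : n ≠ 0) :
    Summable fun p : ℕ × ℕ ↦ oddRecip p.1 ^ n * oddKernel p.1 p.2 := by
  have hodd : Summable fun a : ℕ ↦ (2 * (a : ℝ) + 1) ^ (-(3 / 2) : ℝ) := by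
    simpa [Function.comp_def] using
      (Real.summable_nat_rpow.mpr (show -(3 / 2) < -1 by norm_num)).comp_injective
        strictMono_two_mul_add_one.injective
  have hinj : Function.Injective fun a : ℕ ↦ (2 * a + 1 : ℤ) := fun a b h ↦ by grind
  have hbound : Summable fun p : ℕ × ℕ ↦
      (2 * (p.1 : ℝ) + 1) ^ (-(3 / 2) : ℝ) *
        |(2 * (p.2 : ℝ) + 1) - (2 * p.1 + 1)| ^ (-(3 / 2) : ℝ) := by
    simpa using summable_mul_comp_sub hinj hodd.norm
      (Real.summable_abs_int_rpow (b := 3 / 2) (by norm_num)).norm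
  refine .of_norm_bounded (hbound.add hbound.prod_symm) fun ⟨a, b⟩ ↦
    (abs_oddRecip_pow_mul_oddKernel_le hn a b).trans ?_
  simpa [abs_sub_comm] using inv_mul_inv_mul_inv_abs_sub_le
    (x := 2 * (a : ℝ) + 1) (y := 2 * (b : ℝ) + 1) (by positivity) (by positivity)

theorem hasSum_oddKernel (a : ℕ) :
    HasSum (oddKernel a) (oddRecip a * (-Real.log 2 + oddRecip a - harmonic a / 2)) := by
  have hsummable : Summable (oddKernel a) := by
    simpa [summable_mul_left_iff (oddRecip_pos a).ne'] using
      (summable_oddRecip_pow_mul_oddKernel one_ne_zero).prod_factor a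
  have hpartial : Tendsto (fun n ↦ ∑ b ∈ range (a + 1 + n), oddKernel a b) atTop
      (𝓝 (oddRecip a * (-Real.log 2 + oddRecip a - harmonic a / 2))) := by
    simp only [sum_range_oddKernel]
    exact (((tendsto_half_harmonic_sub_sum_oddRecip (a + 1)).add_const _).sub_const _).const_mul _
  refine (hsummable.hasSum_iff_tendsto_nat).mpr ?_
  refine (tendsto_add_atTop_iff_nat (a + 1)).mp ?_
  simpa only [add_comm] using hpartial

theorem hasSum_oddRecip_pow_mul_half_harmonic {n : ℕ} (hn : n ≠ 0) :
    HasSum (fun a ↦ oddRecip a ^ (n + 1) * (harmonic a / 2))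
      (-Real.log 2 * (MTV [n + 1] / 2) + MTV [n + 2] / 2 - oddKernelSum n) := by
  have hrows : HasSum
      (fun a ↦ oddRecip a ^ n * (oddRecip a * (-Real.log 2 + oddRecip a - harmonic a / 2)))
      (oddKernelSum n) :=
    (summable_oddRecip_pow_mul_oddKernel hn).hasSum.prod_fiberwise
      fun a ↦ (hasSum_oddKernel a).mul_left _
  refine ((((hasSum_oddRecip_pow (by lia)).mul_left _).add
    (hasSum_oddRecip_pow (by lia))).sub hrows).congr_fun fun a ↦ ?_
  ring

theorem zetaEO_eq_sub_oddKernelSum {k : ℕ} (hk : 3 ≤ k) :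
    zetaEO k = -Real.log 2 * (MTV [k - 1] / 2) + MTV [k] / 2 - oddKernelSum (k - 2) := by
  obtain ⟨n, rfl⟩ := Nat.exists_eq_add_of_le' hk
  exact zetaEO_eq_of_hasSum (hasSum_oddRecip_pow_mul_half_harmonic n.succ_ne_zero)

theorem sum_oddRecip_pow_mul_pow_self {k : ℕ} (hk : 3 ≤ k) (a : ℕ) :
    ∑ j ∈ Icc 2 (k - 2), oddRecip a ^ j * oddRecip a ^ (k - j) =
      ((k : ℝ) - 3) * oddRecip a ^ k := by
  have hterm : ∀ j ∈ Icc 2 (k - 2), oddRecip a ^ j * oddRecip a ^ (k - j) = oddRecip a ^ k :=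
    fun j hj ↦ by rw [← pow_add, Nat.add_sub_cancel' (by grind)]
  have hcard : k - 2 + 1 - 2 = k - 3 := by lia
  rw [sum_congr rfl hterm, sum_const, Nat.card_Icc, hcard, nsmul_eq_mul, Nat.cast_sub hk,
    Nat.cast_ofNat]

theorem sum_oddRecip_pow_mul_pow_of_ne {k : ℕ} (hk : 3 ≤ k) {a b : ℕ} (hab : a ≠ b) :
    ∑ j ∈ Icc 2 (k - 2), oddRecip a ^ j * oddRecip b ^ (k - j) =
      oddRecip a ^ (k - 2) * oddKernel a b + oddRecip b ^ (k - 2) * oddKernel b a := by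
  obtain ⟨n, rfl⟩ := Nat.exists_eq_add_of_le' hk
  have hba : (b : ℝ) - a ≠ 0 := sub_ne_zero.mpr (by exact_mod_cast hab.symm)
  have hne : oddRecip a - oddRecip b ≠ 0 := by
    have := oddRecip_pos a
    have := oddRecip_pos b
    rw [oddRecip_sub_oddRecip]
    positivity
  refine mul_right_cancel₀ hne ?_
  rw [sum_Icc_pow_mul_pow_mul_sub, oddRecip_sub_oddRecip, oddKernel, oddKernel,
    ← neg_sub (b : ℝ) a]
  simp only [Nat.add_sub_cancel, show n + 3 - 2 = n + 1 by lia]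
  field_simp
  ring

theorem sum_oddRecip_pow_mul_pow {k : ℕ} (hk : 3 ≤ k) (a b : ℕ) :
    ∑ j ∈ Icc 2 (k - 2), oddRecip a ^ j * oddRecip b ^ (k - j) =
      (if a = b then ((k : ℝ) - 3) * oddRecip a ^ k else 0) +
        (oddRecip a ^ (k - 2) * oddKernel a b + oddRecip b ^ (k - 2) * oddKernel b a) := by
  split_ifs with h
  · subst h
    simp [sum_oddRecip_pow_mul_pow_self hk, oddKernel_self]
  · rw [sum_oddRecip_pow_mul_pow_of_ne hk h, zero_add]

theorem sum_MTV_mul_MTV_s15 {k : ℕ} (hk : 3 ≤ k) :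
    ∑ j ∈ Icc 2 (k - 2), MTV [j] * MTV [k - j] =
      2 * ((k : ℝ) - 3) * MTV [k] + 8 * oddKernelSum (k - 2) := by
  have hkernel : HasSum (fun p : ℕ × ℕ ↦ oddRecip p.1 ^ (k - 2) * oddKernel p.1 p.2)
      (oddKernelSum (k - 2)) :=
    (summable_oddRecip_pow_mul_oddKernel (by lia)).hasSum
  have hswap : HasSum (fun p : ℕ × ℕ ↦ oddRecip p.2 ^ (k - 2) * oddKernel p.2 p.1)
      (oddKernelSum (k - 2)) :=
    (Equiv.prodComm ℕ ℕ).hasSum_iff.mpr hkernel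
  have hdiag := hasSum_ite_eq_diag
    ((hasSum_oddRecip_pow (k := k) (by lia)).mul_left ((k : ℝ) - 3))
  have hprod : HasSum
      (fun p : ℕ × ℕ ↦ ∑ j ∈ Icc 2 (k - 2), oddRecip p.1 ^ j * oddRecip p.2 ^ (k - j))
      (∑ j ∈ Icc 2 (k - 2), MTV [j] / 2 * (MTV [k - j] / 2)) := by
    refine hasSum_sum fun j hj ↦ hasSum_oddRecip_pow_mul_pow ?_ ?_ <;> grind
  simp only [sum_oddRecip_pow_mul_pow hk] at hprod
  have hsum := hprod.unique (hdiag.add (hkernel.add hswap))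
  simp only [div_mul_div_comm, ← sum_div] at hsum
  linarith

/-- **Lemma.** For every integer `k ≥ 3`,
`4 ζ^{eo}(1, k−1) = (k−1) T(k) − (2 log 2) T(k−1) − (1/2) ∑_{j=2}^{k−2} T(j) T(k−j)`. -/
theorem four_zetaEO (k : ℕ) (hk : 3 ≤ k) :
    4 * zetaEO k
      = ((k : ℝ) - 1) * MTV [k] - (2 * Real.log 2) * MTV [k - 1]
        - (1 / 2) * ∑ j ∈ Finset.Icc 2 (k - 2), MTV [j] * MTV [k - j] := by
  rw [sum_MTV_mul_MTV_s15 hk, zetaEO_eq_sub_oddKernelSum hk]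
  ring
end
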